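/- Let S be a self-adjoint regular operator and T a symmetric regular operator on a Hilbert B-module E. Assume for every μ ∈ ℝ∖{0}: (1) (S+iμ)^{-1}Dom(T) ⊆ Dom(S) ∩ Dom(T) ∩ Dom(ST) and the operator (ST+TS)(S+iμ)^{-1} extends to a bounded adjointable operator on E; (2) (S+iμ)^{-1}Dom(T*) ⊆ Dom(S) ∩ Dom(T*) ∩ Dom(ST*) and (ST*+T*S)(S+iμ)^{-1} extends to a bounded adjointable operator on E. Then S+T is a closed regular symmetric operator with domain Dom(S) ∩ Dom(T), and (S+T)* is the closure of S+T* equipped with the domain Dom(S) ∩ Dom(T*). -/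

import Mathlib

/-!
Core framework for unbounded KK-theory following Deeley–Goffeng–Mesland,
"The bordism group of unbounded KK-cycles".

We model Hilbert C*-modules over a C*-algebra `B` as bundled structures, and
(unbounded) regular operators via their graphs.
-/

noncomputable section

namespace UKK

open Complex

/-- A (right) Hilbert C*-module over a C*-algebra `B`, bundled together with its
`B`-valued inner product and right `B`-action. -/
structure HilbMod (B : Type) [NonUnitalCStarAlgebra B] : Type 1 where
  carrier : Type
  [nacg : NormedAddCommGroup carrier]
  [nsc : NormedSpace ℂ carrier]
  [cs : CompleteSpace carrier]
  /-- the right action of `B` -/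
  smulB : carrier → B → carrier
  /-- the `B`-valued inner product -/
  inner : carrier → carrier → B
  inner_add_right : ∀ x y z : carrier, inner x (y + z) = inner x y + inner x z
  inner_smul_right : ∀ (x : carrier) (c : ℂ) (y : carrier), inner x (c • y) = c • inner x y
  inner_smulB_right : ∀ (x y : carrier) (b : B), inner x (smulB y b) = inner x y * b
  star_inner : ∀ x y : carrier, star (inner x y) = inner y x
  norm_sq_eq : ∀ x : carrier, ‖x‖ ^ 2 = ‖inner x x‖
  norm_inner_le : ∀ x y : carrier, ‖inner x y‖ ≤ ‖x‖ * ‖y‖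
  add_smulB : ∀ (x y : carrier) (b : B), smulB (x + y) b = smulB x b + smulB y b
  smulB_add : ∀ (x : carrier) (b₁ b₂ : B), smulB x (b₁ + b₂) = smulB x b₁ + smulB x b₂
  smulB_mul : ∀ (x : carrier) (b₁ b₂ : B), smulB x (b₁ * b₂) = smulB (smulB x b₁) b₂
  smul_smulB : ∀ (c : ℂ) (x : carrier) (b : B), smulB (c • x) b = c • smulB x b

attribute [instance] HilbMod.nacg HilbMod.nsc HilbMod.cs

variable {B : Type} [NonUnitalCStarAlgebra B]

/-- A bounded adjointable (`B`-linear) operator between Hilbert `B`-modules. -/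
structure Adj (E F : HilbMod B) where
  toFun : E.carrier →L[ℂ] F.carrier
  adjFun : F.carrier →L[ℂ] E.carrier
  map_smulB : ∀ x b, toFun (E.smulB x b) = F.smulB (toFun x) b
  adj_map_smulB : ∀ y b, adjFun (F.smulB y b) = E.smulB (adjFun y) b
  inner_adj : ∀ x y, F.inner (toFun x) y = E.inner x (adjFun y)

/-- The graph of a (possibly unbounded) `B`-linear operator `E ⇢ F`:
a `ℂ`-submodule of `E × F` which is `B`-invariant and single-valued. -/
def IsOperatorGraph (E F : HilbMod B) (G : Set (E.carrier × F.carrier)) : Prop :=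
  (∃ S : Submodule ℂ (E.carrier × F.carrier), (S : Set (E.carrier × F.carrier)) = G) ∧
  (∀ p ∈ G, ∀ b : B, (E.smulB p.1 b, F.smulB p.2 b) ∈ G) ∧
  (∀ y : F.carrier, ((0 : E.carrier), y) ∈ G → y = 0)

/-- The domain of an operator graph. -/
def gdom {E F : HilbMod B} (G : Set (E.carrier × F.carrier)) : Set E.carrier :=
  Prod.fst '' G

/-- The graph of the adjoint operator: `(y, z) ∈ G(D*)` iff
`⟪Dx, y⟫ = ⟪x, z⟫` for all `(x, Dx) ∈ G(D)`. -/
def adjointGraph (E F : HilbMod B) (G : Set (E.carrier × F.carrier)) :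
    Set (F.carrier × E.carrier) :=
  {q | ∀ p ∈ G, F.inner p.2 q.1 = E.inner p.1 q.2}

/-- A semi-regular operator: a closed densely defined operator graph with densely
defined adjoint. -/
def IsSemiRegular (E F : HilbMod B) (G : Set (E.carrier × F.carrier)) : Prop :=
  IsOperatorGraph E F G ∧ IsClosed G ∧ Dense (gdom G) ∧ Dense (gdom (adjointGraph E F G))

/-- A regular operator: a semi-regular operator such that `1 + D*D` has dense range. -/
def IsRegular (E F : HilbMod B) (G : Set (E.carrier × F.carrier)) : Prop :=
  IsSemiRegular E F G ∧
    Dense {w : E.carrier | ∃ x y z, (x, y) ∈ G ∧ (y, z) ∈ adjointGraph E F G ∧ w = x + z}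

/-- A symmetric operator: `D ⊆ D*`. -/
def IsSymmetricGraph (E : HilbMod B) (G : Set (E.carrier × E.carrier)) : Prop :=
  G ⊆ adjointGraph E E G

/-- A self-adjoint operator: `D = D*`. -/
def IsSelfAdjointGraph (E : HilbMod B) (G : Set (E.carrier × E.carrier)) : Prop :=
  adjointGraph E E G = G

/-- The sum of two operators, with domain the intersection of the domains. -/
def sumGraph (E F : HilbMod B) (G₁ G₂ : Set (E.carrier × F.carrier)) :
    Set (E.carrier × F.carrier) :=
  {p | ∃ y₁ y₂, (p.1, y₁) ∈ G₁ ∧ (p.1, y₂) ∈ G₂ ∧ p.2 = y₁ + y₂}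

/-- Finite rank operators `z ↦ ∑ vᵢ · ⟪wᵢ, z⟫`. -/
def finiteRankSet (E F : HilbMod B) : Set (E.carrier →L[ℂ] F.carrier) :=
  {S | ∃ (n : ℕ) (v : Fin n → F.carrier) (w : Fin n → E.carrier),
    ∀ z, S z = ∑ i, F.smulB (v i) (E.inner (w i) z)}

/-- `B`-compact operators: norm limits of finite rank operators. -/
def IsCompactOp (E F : HilbMod B) (T : E.carrier →L[ℂ] F.carrier) : Prop :=
  T ∈ closure (finiteRankSet E F)

/-- `C` is a bounded adjointable extension of the commutator `[D, T]`,
and `T` preserves the domain of `D`.  This says `T ∈ Lip(D)` with commutator `C`. -/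
def IsLipFor (E : HilbMod B) (G : Set (E.carrier × E.carrier)) (T C : Adj E E) : Prop :=
  ∀ p ∈ G, ∃ y', (T.toFun p.1, y') ∈ G ∧ C.toFun p.1 = y' - T.toFun p.2

/-- Membership in the Lipschitz algebra `Lip(D)` of the operator with graph `G`. -/
def MemLip (E : HilbMod B) (G : Set (E.carrier × E.carrier)) (T : Adj E E) : Prop :=
  ∃ C : Adj E E, IsLipFor E G T C

/-- A *-representation of a C*-algebra `A` by adjointable operators on a
Hilbert `B`-module. -/
structure RepOn (A : Type) [NonUnitalCStarAlgebra A] {B : Type} [NonUnitalCStarAlgebra B]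
    (E : HilbMod B) where
  π : A → Adj E E
  π_add : ∀ a₁ a₂ x, (π (a₁ + a₂)).toFun x = (π a₁).toFun x + (π a₂).toFun x
  π_mul : ∀ a₁ a₂ x, (π (a₁ * a₂)).toFun x = (π a₁).toFun ((π a₂).toFun x)
  π_smul : ∀ (c : ℂ) a x, (π (c • a)).toFun x = c • (π a).toFun x
  π_star : ∀ a, (π (star a)).toFun = (π a).adjFun

/-- A grading operator (a self-adjoint adjointable involution) on a Hilbert module. -/
structure GradingOf (E : HilbMod B) where
  γ : Adj E E
  invol : ∀ x, γ.toFun (γ.toFun x) = x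
  selfadj : γ.adjFun = γ.toFun

/-- A dense *-subalgebra `𝒜 ⊆ A`, equipped with a (locally convex) topology finer
than the C*-topology. -/
structure DenseSub (A : Type) [NonUnitalCStarAlgebra A] where
  alg : NonUnitalStarSubalgebra ℂ A
  dense : Dense (alg : Set A)
  top : TopologicalSpace alg
  cont : @Continuous _ _ top _ (Subtype.val : alg → A)

variable {A : Type} [NonUnitalCStarAlgebra A]

/-- The conditions of an `(𝒜,B)`-chain: a regular operator `D` (odd when graded),
with `A` acting by even operators, such that the representation restricts to a
continuous homomorphism `𝒜 → Lip(D)`. -/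
def IsChainOn (𝓐 : DenseSub A) (E : HilbMod B) (ρ : RepOn A E) (gr : Option (GradingOf E))
    (G : Set (E.carrier × E.carrier)) : Prop :=
  IsRegular E E G ∧
  (∀ g, gr = some g →
    (∀ (a : A) x, g.γ.toFun ((ρ.π a).toFun x) = (ρ.π a).toFun (g.γ.toFun x)) ∧
    (∀ p ∈ G, (g.γ.toFun p.1, -(g.γ.toFun p.2)) ∈ G)) ∧
  (∃ Λ : 𝓐.alg → Adj E E,
    (∀ a : 𝓐.alg, IsLipFor E G (ρ.π (a : A)) (Λ a)) ∧
    @Continuous _ _ 𝓐.top _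
      (fun a : 𝓐.alg => (((ρ.π (a : A)).toFun : E.carrier →L[ℂ] E.carrier), (Λ a).toFun)))

/-- Local compactness of the resolvents `π(a)(D ± i)⁻¹`. -/
def HasLocallyCompactResolvent (E : HilbMod B) (ρ : RepOn A E)
    (G : Set (E.carrier × E.carrier)) : Prop :=
  ∀ (a : A) (s : ℝ), s = 1 ∨ s = -1 →
    ∃ C : E.carrier →L[ℂ] E.carrier, IsCompactOp E E C ∧
      ∀ p ∈ G, C (p.2 + ((s : ℂ) * Complex.I) • p.1) = (ρ.π a).toFun p.1

/-- The conditions of a closed `(𝒜,B)`-cycle. -/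
def IsCycleOn (𝓐 : DenseSub A) (E : HilbMod B) (ρ : RepOn A E) (gr : Option (GradingOf E))
    (G : Set (E.carrier × E.carrier)) : Prop :=
  IsChainOn 𝓐 E ρ gr G ∧ IsSelfAdjointGraph E G ∧ HasLocallyCompactResolvent E ρ G

/-- The conditions of a symmetric `(𝒜,B)`-chain. -/
def IsSymmetricChainOn (𝓐 : DenseSub A) (E : HilbMod B) (ρ : RepOn A E)
    (gr : Option (GradingOf E)) (G : Set (E.carrier × E.carrier)) : Prop :=
  IsChainOn 𝓐 E ρ gr G ∧ IsSymmetricGraph E G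

/-- A closed `(𝒜,B)`-cycle. -/
structure KKCycle (𝓐 : DenseSub A) (B : Type) [NonUnitalCStarAlgebra B] : Type 1 where
  E : HilbMod B
  ρ : RepOn A E
  gr : Option (GradingOf E)
  G : Set (E.carrier × E.carrier)
  is : IsCycleOn 𝓐 E ρ gr G

/-- A symmetric `(𝒜,B)`-chain. -/
structure SChain (𝓐 : DenseSub A) (B : Type) [NonUnitalCStarAlgebra B] : Type 1 where
  E : HilbMod B
  ρ : RepOn A E
  gr : Option (GradingOf E)
  G : Set (E.carrier × E.carrier)
  is : IsSymmetricChainOn 𝓐 E ρ gr G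

/-- A unitary isomorphism of Hilbert `B`-modules. -/
structure UIso (E F : HilbMod B) where
  u : Adj E F
  linv : ∀ x, u.adjFun (u.toFun x) = x
  rinv : ∀ y, u.toFun (u.adjFun y) = y

/-- A decomposition of `E` as the direct sum of `E₁` and `E₂`, given by a pair of
isometric embeddings with orthogonal ranges and dense total range. -/
structure SumDecomp (E E₁ E₂ : HilbMod B) where
  j₁ : Adj E₁ E
  j₂ : Adj E₂ E
  isom₁ : ∀ x y, E.inner (j₁.toFun x) (j₁.toFun y) = E₁.inner x y
  isom₂ : ∀ x y, E.inner (j₂.toFun x) (j₂.toFun y) = E₂.inner x y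
  orth : ∀ x y, E.inner (j₁.toFun x) (j₂.toFun y) = 0
  total : Dense {z : E.carrier | ∃ x y, z = j₁.toFun x + j₂.toFun y}

/-- `c` is (isomorphic to) the direct sum of the cycles `c₁` and `c₂`. -/
def IsSumOf {𝓐 : DenseSub A} (c c₁ c₂ : KKCycle 𝓐 B) : Prop :=
  ∃ d : SumDecomp c.E c₁.E c₂.E,
    (∀ (a : A) x, (c.ρ.π a).toFun (d.j₁.toFun x) = d.j₁.toFun ((c₁.ρ.π a).toFun x)) ∧
    (∀ (a : A) x, (c.ρ.π a).toFun (d.j₂.toFun x) = d.j₂.toFun ((c₂.ρ.π a).toFun x)) ∧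
    (c.G = {pr | ∃ p₁ ∈ c₁.G, ∃ p₂ ∈ c₂.G,
        pr = (d.j₁.toFun p₁.1 + d.j₂.toFun p₂.1, d.j₁.toFun p₁.2 + d.j₂.toFun p₂.2)}) ∧
    (c.gr.isSome = c₁.gr.isSome ∧ c.gr.isSome = c₂.gr.isSome) ∧
    (∀ g g₁, c.gr = some g → c₁.gr = some g₁ →
      ∀ x, g.γ.toFun (d.j₁.toFun x) = d.j₁.toFun (g₁.γ.toFun x)) ∧
    (∀ g g₂, c.gr = some g → c₂.gr = some g₂ →
      ∀ x, g.γ.toFun (d.j₂.toFun x) = d.j₂.toFun (g₂.γ.toFun x))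

/-- `c'` is (isomorphic to) the inverse `-c` of the cycle `c`: for odd cycles the
sign of the operator is reversed, for even cycles the grading is reversed. -/
def IsNegOf {𝓐 : DenseSub A} (c' c : KKCycle 𝓐 B) : Prop :=
  ∃ u : UIso c.E c'.E,
    (∀ (a : A) x, u.u.toFun ((c.ρ.π a).toFun x) = (c'.ρ.π a).toFun (u.u.toFun x)) ∧
    ((c.gr = none ∧ c'.gr = none ∧
        ∀ pr : c.E.carrier × c.E.carrier,
          pr ∈ c.G ↔ (u.u.toFun pr.1, -u.u.toFun pr.2) ∈ c'.G) ∨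
     (∃ g g', c.gr = some g ∧ c'.gr = some g' ∧
        (∀ pr : c.E.carrier × c.E.carrier,
          pr ∈ c.G ↔ (u.u.toFun pr.1, u.u.toFun pr.2) ∈ c'.G) ∧
        ∀ x, u.u.toFun (g.γ.toFun x) = -(g'.γ.toFun (u.u.toFun x))))

/-- Isomorphism of cycles. -/
def CycleIso {𝓐 : DenseSub A} (c c' : KKCycle 𝓐 B) : Prop :=
  ∃ u : UIso c.E c'.E,
    (∀ (a : A) x, u.u.toFun ((c.ρ.π a).toFun x) = (c'.ρ.π a).toFun (u.u.toFun x)) ∧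
    (∀ pr : c.E.carrier × c.E.carrier,
      pr ∈ c.G ↔ (u.u.toFun pr.1, u.u.toFun pr.2) ∈ c'.G) ∧
    (c.gr = none ↔ c'.gr = none) ∧
    (∀ g g', c.gr = some g → c'.gr = some g' →
      ∀ x, u.u.toFun (g.γ.toFun x) = g'.γ.toFun (u.u.toFun x))

/-! ### Function classes on the interval -/

/-- `C^∞_c(0,1]`: smooth functions vanishing near `0`. -/
def SmoothVan0 (φ : ℝ → ℂ) : Prop :=
  ContDiff ℝ (⊤ : ℕ∞) φ ∧ ∃ ε > (0 : ℝ), ∀ t ≤ ε, φ t = 0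

/-- `C^∞_c(0,1)`: smooth functions vanishing near `0` and near `1`. -/
def SmoothVan01 (φ : ℝ → ℂ) : Prop :=
  SmoothVan0 φ ∧ ∃ ε > (0 : ℝ), ∀ t, 1 - ε ≤ t → φ t = 0

/-- `C¹₀((0,1]) `: `C¹` functions with `φ(0) = 0` and `φ'(0) = 0`. -/
def C1Van0 (φ : ℝ → ℂ) : Prop :=
  ContDiff ℝ 1 φ ∧ φ 0 = 0 ∧ deriv φ 0 = 0

/-! ### Boundary data and Hilsum bordisms -/

/-- Boundary data `(θ, p)` for a closed cycle `c = (E, D)` relative to a symmetric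
chain `Fc = (F, Q)`, together with a model `L` of the cylinder `L²[0,1] ⊗̂ E`
(with its `C[0,1]`-action `mult`, its `A`-action `ρL` and the operator `Ψ(D)`,
whose graph is `PsiG`). -/
structure BoundaryData {𝓐 : DenseSub A} (Fc : SChain 𝓐 B) (c : KKCycle 𝓐 B) where
  L : HilbMod B
  ρL : RepOn A L
  mult : (ℝ → ℂ) → Adj L L
  mult_mul : ∀ φ ψ : ℝ → ℂ, Continuous φ → Continuous ψ →
    ∀ x, (mult (fun t => φ t * ψ t)).toFun x = (mult φ).toFun ((mult ψ).toFun x)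
  mult_add : ∀ φ ψ : ℝ → ℂ, Continuous φ → Continuous ψ →
    ∀ x, (mult (fun t => φ t + ψ t)).toFun x = (mult φ).toFun x + (mult ψ).toFun x
  mult_star : ∀ φ : ℝ → ℂ, Continuous φ →
    (mult (fun t => (starRingEnd ℂ) (φ t))).toFun = (mult φ).adjFun
  mult_comm_rep : ∀ (φ : ℝ → ℂ) (a : A) x,
    (mult φ).toFun ((ρL.π a).toFun x) = (ρL.π a).toFun ((mult φ).toFun x)
  /-- the chain has complementary parity to the cycle -/
  parity : Fc.gr.isSome ↔ c.gr = none
  /-- the graph of the operator `Ψ(D)` on the cylinder -/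
  PsiG : Set (L.carrier × L.carrier)
  psi_symm : IsSymmetricGraph L PsiG
  psi_semireg : IsSemiRegular L L PsiG
  /-- the projection `p` -/
  p : Adj Fc.E Fc.E
  p_idem : ∀ x, p.toFun (p.toFun x) = p.toFun x
  p_sa : p.adjFun = p.toFun
  p_comm : ∀ (a : A) x, p.toFun ((Fc.ρ.π a).toFun x) = (Fc.ρ.π a).toFun (p.toFun x)
  /-- the isomorphism `θ : pF ≅ L²[0,1] ⊗̂ E`, as a coisometry on `F` with
  `θ*θ = p`. -/
  θ : Adj Fc.E L
  θ_p : ∀ x, θ.toFun (p.toFun x) = θ.toFun x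
  θ_coisom : ∀ z, θ.toFun (θ.adjFun z) = z
  θ_isom : ∀ x, θ.adjFun (θ.toFun x) = p.toFun x
  θ_rep : ∀ (a : A) x, θ.toFun ((Fc.ρ.π a).toFun x) = (ρL.π a).toFun (θ.toFun x)

namespace BoundaryData

variable {𝓐 : DenseSub A} {Fc : SChain 𝓐 B} {c : KKCycle 𝓐 B}

/-- The operator `b(φ) = θ (φ ⊗ 1) θ⁻¹ p + φ(1)(1-p)` on `F`. -/
def bop0 (d : BoundaryData Fc c) (φ : ℝ → ℂ) (x : Fc.E.carrier) : Fc.E.carrier :=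
  d.θ.adjFun ((d.mult φ).toFun (d.θ.toFun x)) + φ 1 • (x - d.p.toFun x)

/-- The operator `b(φ ⊗ a)` on `F`. -/
def bopA (d : BoundaryData Fc c) (φ : ℝ → ℂ) (a : A) (x : Fc.E.carrier) : Fc.E.carrier :=
  d.bop0 φ ((Fc.ρ.π a).toFun x)

/-- Hilsum's boundary conditions: `c` is a boundary of the symmetric chain `Fc`
with boundary data `(θ, p)`. -/
def IsBoundaryOf (d : BoundaryData Fc c) : Prop :=
  (∀ φ : ℝ → ℂ, SmoothVan0 φ →
    ∀ x ∈ gdom (adjointGraph Fc.E Fc.E Fc.G), d.bop0 φ x ∈ gdom Fc.G) ∧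
  (∀ φ : ℝ → ℂ, SmoothVan01 φ →
    ((fun z => (d.mult φ).toFun z) '' gdom d.PsiG
        = (fun x => d.θ.toFun (d.bop0 φ x)) '' gdom Fc.G) ∧
    (∀ x w, x ∈ gdom Fc.G → (d.bop0 φ x, w) ∈ Fc.G →
      (d.θ.toFun (d.bop0 φ x), d.θ.toFun w) ∈ d.PsiG)) ∧
  (∀ φ₁ φ₂ : ℝ → ℂ, ContDiff ℝ (⊤ : ℕ∞) φ₁ → ContDiff ℝ (⊤ : ℕ∞) φ₂ →
    (∀ t ∈ Set.Icc (0 : ℝ) 1, φ₁ t * φ₂ t = 0) →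
    ∀ x w, (d.bop0 φ₂ x, w) ∈ Fc.G → d.bop0 φ₁ w = 0)

/-- `(Fc, Q, θ, p)` is a bordism: the boundary conditions hold, and the induced
symmetric `(C¹₀((0,1],𝒜), B)`-chain is half-closed. -/
def IsBordism (d : BoundaryData Fc c) : Prop :=
  d.IsBoundaryOf ∧
  (∀ φ : ℝ → ℂ, C1Van0 φ → ∀ a : 𝓐.alg,
    (∃ T C : Adj Fc.E Fc.E, (∀ x, T.toFun x = d.bopA φ (a : A) x) ∧ IsLipFor Fc.E Fc.G T C) ∧
    (∀ x ∈ gdom (adjointGraph Fc.E Fc.E Fc.G), d.bopA φ (a : A) x ∈ gdom Fc.G) ∧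
    (∃ K : Fc.E.carrier →L[ℂ] Fc.E.carrier, IsCompactOp Fc.E Fc.E K ∧
      ∀ x y z, (x, y) ∈ Fc.G → (y, z) ∈ adjointGraph Fc.E Fc.E Fc.G →
        K (x + z) = d.bopA φ (a : A) x))

end BoundaryData

/-- A closed cycle is nullbordant when it is the boundary of a bordism. -/
def Nullbordant {𝓐 : DenseSub A} (c : KKCycle 𝓐 B) : Prop :=
  ∃ (Fc : SChain 𝓐 B) (d : BoundaryData Fc c), d.IsBordism

/-- Hilsum's bordism relation: `c₁ ∼_bor c₂` iff `c₁ + (-c₂)` is nullbordant. -/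
def Bordant {𝓐 : DenseSub A} (c₁ c₂ : KKCycle 𝓐 B) : Prop :=
  ∃ n₂ s : KKCycle 𝓐 B, IsNegOf n₂ c₂ ∧ IsSumOf s c₁ n₂ ∧ Nullbordant s

/-- The bordism group `Ω_*(𝒜, B)` (as a set of bordism classes). -/
def Omega (𝓐 : DenseSub A) (B : Type) [NonUnitalCStarAlgebra B] : Type 1 :=
  Quot (fun c c' : KKCycle 𝓐 B => Bordant c c')

end UKK

end
namespace UKK

/-! ### Basic facts on the inner product -/

section basic

variable {B : Type} [NonUnitalCStarAlgebra B] (E : HilbMod B)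

lemma inner_add_left (x y z : E.carrier) : E.inner (x + y) z = E.inner x z + E.inner y z := by
  rw [← E.star_inner z (x + y), E.inner_add_right, star_add, E.star_inner, E.star_inner]

lemma inner_smul_left (c : ℂ) (x z : E.carrier) :
    E.inner (c • x) z = star c • E.inner x z := by
  rw [← E.star_inner z (c • x), E.inner_smul_right, star_smul, E.star_inner]

lemma inner_smulB_left (x z : E.carrier) (b : B) :
    E.inner (E.smulB x b) z = star b * E.inner x z := by
  rw [← E.star_inner z, E.inner_smulB_right, star_mul, E.star_inner]

lemma inner_zero_right (x : E.carrier) : E.inner x 0 = 0 := by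
  have := E.inner_smul_right x 0 0
  simpa using this

lemma inner_zero_left (x : E.carrier) : E.inner 0 x = 0 := by
  have := inner_smul_left E 0 0 x
  simpa using this

lemma inner_sub_right (x y z : E.carrier) : E.inner x (y - z) = E.inner x y - E.inner x z := by
  have h := E.inner_smul_right x (-1) z
  rw [sub_eq_add_neg, E.inner_add_right, ← neg_one_smul ℂ z, h, neg_one_smul, sub_eq_add_neg]

lemma eq_zero_of_inner_self (x : E.carrier) (h : E.inner x x = 0) : x = 0 := by
  have := E.norm_sq_eq x
  rw [h, norm_zero] at this
  simpa using this

lemma eq_of_inner (x y : E.carrier) (h : ∀ z, E.inner z x = E.inner z y) : x = y := by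
  apply sub_eq_zero.1
  apply eq_zero_of_inner_self E
  rw [inner_sub_right, h, sub_self]

lemma smulB_smul (x : E.carrier) (c : ℂ) (b : B) :
    E.smulB x (c • b) = c • E.smulB x b := by
  apply eq_of_inner
  intro z
  rw [E.inner_smulB_right, E.inner_smul_right, E.inner_smulB_right, mul_smul_comm]

lemma norm_smulB_le (x : E.carrier) (b : B) : ‖E.smulB x b‖ ≤ ‖x‖ * ‖b‖ := by
  have h : ‖E.smulB x b‖ ^ 2 ≤ (‖x‖ * ‖b‖) ^ 2 := by
    rw [E.norm_sq_eq, E.inner_smulB_right, inner_smulB_left]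
    calc ‖star b * E.inner x x * b‖ ≤ ‖star b‖ * ‖E.inner x x‖ * ‖b‖ :=
          (norm_mul_le _ _).trans (mul_le_mul_of_nonneg_right (norm_mul_le _ _) (norm_nonneg _))
      _ = (‖x‖ * ‖b‖) ^ 2 := by rw [norm_star, ← E.norm_sq_eq]; ring
  exact (sq_le_sq₀ (norm_nonneg _) (by positivity)).1 h
  
end basic

end UKK

namespace UKK

/-! ### The C*-algebra of adjointable operators and positivity -/

section cstar

variable {B : Type} [NonUnitalCStarAlgebra B] (E : HilbMod B)

lemma norm_inner_self (x : E.carrier) : ‖E.inner x x‖ = ‖x‖ * ‖x‖ := by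
  rw [← E.norm_sq_eq, sq]

lemma continuous_inner_right (x : E.carrier) : Continuous (fun y : E.carrier => E.inner x y) := by
  let f : E.carrier →ₗ[ℂ] B :=
    { toFun := fun y => E.inner x y
      map_add' := E.inner_add_right x
      map_smul' := E.inner_smul_right x }
  exact (f.mkContinuous ‖x‖ (E.norm_inner_le x)).continuous

lemma continuous_inner_left (y : E.carrier) : Continuous (fun x : E.carrier => E.inner x y) := by
  have : (fun x : E.carrier => E.inner x y) = fun x => star (E.inner y x) := by
    funext x; rw [E.star_inner]
  rw [this]
  exact (continuous_inner_right E y).star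

/-- `s` is an adjoint of `t`. -/
def IsAdjPair (t s : E.carrier →L[ℂ] E.carrier) : Prop :=
  ∀ x y, E.inner (t x) y = E.inner x (s y)

variable {E}

lemma IsAdjPair.symm {t s : E.carrier →L[ℂ] E.carrier} (h : IsAdjPair E t s) :
    IsAdjPair E s t := by
  intro x y
  rw [← E.star_inner, ← h, E.star_inner]

lemma IsAdjPair.unique {t s s' : E.carrier →L[ℂ] E.carrier} (h : IsAdjPair E t s)
    (h' : IsAdjPair E t s') : s = s' := by
  ext y
  apply eq_of_inner
  intro z
  rw [← h, ← h']

lemma IsAdjPair.norm_le {t s : E.carrier →L[ℂ] E.carrier} (h : IsAdjPair E t s) :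
    ‖t‖ ≤ ‖s‖ := by
  refine ContinuousLinearMap.opNorm_le_bound _ (norm_nonneg _) fun x => ?_
  have h1 : ‖t x‖ * ‖t x‖ ≤ ‖t x‖ * (‖s‖ * ‖x‖) := by
    rw [← norm_inner_self, ← h.symm (t x) x]
    refine (E.norm_inner_le _ _).trans ?_
    have := s.le_opNorm (t x)
    nlinarith [norm_nonneg x]
  rcases (norm_nonneg (t x)).eq_or_lt with h0 | h0
  · rw [← h0]; positivity
  · exact le_of_mul_le_mul_left h1 h0

lemma IsAdjPair.norm_eq {t s : E.carrier →L[ℂ] E.carrier} (h : IsAdjPair E t s) :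
    ‖t‖ = ‖s‖ := le_antisymm h.norm_le h.symm.norm_le

lemma IsAdjPair.add {t s t' s' : E.carrier →L[ℂ] E.carrier} (h : IsAdjPair E t s)
    (h' : IsAdjPair E t' s') : IsAdjPair E (t + t') (s + s') := by
  intro x y
  simp [inner_add_left, E.inner_add_right, h x y, h' x y]

lemma IsAdjPair.smul {t s : E.carrier →L[ℂ] E.carrier} (h : IsAdjPair E t s) (c : ℂ) :
    IsAdjPair E (c • t) (star c • s) := by
  intro x y
  simp [inner_smul_left, E.inner_smul_right, h x y]

lemma IsAdjPair.mul {t s t' s' : E.carrier →L[ℂ] E.carrier} (h : IsAdjPair E t s)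
    (h' : IsAdjPair E t' s') : IsAdjPair E (t * t') (s' * s) := by
  intro x y
  simp [h _ _, h' _ _]

lemma IsAdjPair.one : IsAdjPair E (1 : E.carrier →L[ℂ] E.carrier) 1 := by
  intro x y
  simp

variable (E)

/-- The algebra of adjointable operators. -/
noncomputable def AdjAlg : Subalgebra ℂ (E.carrier →L[ℂ] E.carrier) where
  carrier := {t | ∃ s, IsAdjPair E t s}
  mul_mem' := fun ⟨_, h⟩ ⟨_, h'⟩ => ⟨_, h.mul h'⟩
  add_mem' := fun ⟨_, h⟩ ⟨_, h'⟩ => ⟨_, h.add h'⟩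
  algebraMap_mem' := by
    intro c
    rw [Algebra.algebraMap_eq_smul_one]
    exact ⟨_, IsAdjPair.one.smul c⟩

variable {E}

/-- the adjoint of an element of `AdjAlg` -/
noncomputable def adjOf (t : AdjAlg E) : E.carrier →L[ℂ] E.carrier := t.2.choose

lemma adjOf_spec (t : AdjAlg E) : IsAdjPair E t (adjOf t) := t.2.choose_spec

noncomputable instance : StarRing (AdjAlg E) where
  star t := ⟨adjOf t, _, (adjOf_spec t).symm⟩
  star_involutive t := by
    apply Subtype.ext
    exact (adjOf_spec (⟨adjOf t, _, (adjOf_spec t).symm⟩ : AdjAlg E)).unique (adjOf_spec t).symm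
  star_mul t t' := by
    apply Subtype.ext
    exact (adjOf_spec (t * t')).unique ((adjOf_spec t).mul (adjOf_spec t'))
  star_add t t' := by
    apply Subtype.ext
    exact (adjOf_spec (t + t')).unique ((adjOf_spec t).add (adjOf_spec t'))

lemma coe_star_adjAlg (t : AdjAlg E) :
    ((star t : AdjAlg E) : E.carrier →L[ℂ] E.carrier) = adjOf t := rfl

instance : StarModule ℂ (AdjAlg E) where
  star_smul c t := by
    apply Subtype.ext
    exact (adjOf_spec (c • t)).unique ((adjOf_spec t).smul c)

lemma norm_adjOf (t : AdjAlg E) : ‖adjOf t‖ = ‖t‖ := (adjOf_spec t).norm_eq.symm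

instance : CStarRing (AdjAlg E) where
  norm_mul_self_le t := by
    have key : ∀ x, ‖(t : E.carrier →L[ℂ] E.carrier) x‖ ^ 2 ≤ ‖star t * t‖ * ‖x‖ ^ 2 := by
      intro x
      rw [sq, ← norm_inner_self, adjOf_spec t]
      refine (E.norm_inner_le _ _).trans ?_
      have : ‖adjOf t ((t : E.carrier →L[ℂ] E.carrier) x)‖ ≤ ‖star t * t‖ * ‖x‖ :=
        ((star t * t : AdjAlg E) : E.carrier →L[ℂ] E.carrier).le_opNorm x
      nlinarith [norm_nonneg x]
    have h2 : ‖t‖ ≤ Real.sqrt ‖star t * t‖ := by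
      refine ContinuousLinearMap.opNorm_le_bound _ (Real.sqrt_nonneg _) fun x => ?_
      refine (sq_le_sq₀ (norm_nonneg _) (by positivity)).1 ?_
      have hk := key x
      rw [← Real.sq_sqrt (norm_nonneg (star t * t)), ← mul_pow] at hk
      exact hk
    calc ‖t‖ * ‖t‖ ≤ Real.sqrt ‖star t * t‖ * Real.sqrt ‖star t * t‖ := by gcongr
      _ = _ := Real.mul_self_sqrt (norm_nonneg _)

lemma isClosed_adjAlg : IsClosed (AdjAlg E : Set (E.carrier →L[ℂ] E.carrier)) := by
  refine isClosed_of_closure_subset fun t ht => ?_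
  obtain ⟨u, hu, hlim⟩ := mem_closure_iff_seq_limit.1 ht
  let v : ℕ → AdjAlg E := fun n => ⟨u n, hu n⟩
  have hc : CauchySeq (fun n => adjOf (v n)) := by
    have h0 : CauchySeq u := hlim.cauchySeq
    rw [Metric.cauchySeq_iff] at h0 ⊢
    intro ε hε
    obtain ⟨N, hN⟩ := h0 ε hε
    refine ⟨N, fun m hm n hn => ?_⟩
    have := hN m hm n hn
    rw [dist_eq_norm] at this ⊢
    have e : adjOf (v m) - adjOf (v n) = adjOf (v m - v n) := by
      have := congrArg (Subtype.val) (star_sub (v m) (v n))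
      exact this.symm
    rw [e, norm_adjOf]
    exact this
  obtain ⟨s, hs⟩ := cauchySeq_tendsto_of_complete hc
  refine ⟨s, fun x y => ?_⟩
  have h1 : Filter.Tendsto (fun n => E.inner (u n x) y) Filter.atTop (nhds (E.inner (t x) y)) :=
    ((continuous_inner_left E y).tendsto _).comp
      (((ContinuousLinearMap.apply ℂ E.carrier x).continuous.tendsto t).comp hlim)
  have h2 : Filter.Tendsto (fun n => E.inner x (adjOf (v n) y)) Filter.atTop
      (nhds (E.inner x (s y))) :=
    ((continuous_inner_right E x).tendsto _).comp
      (((ContinuousLinearMap.apply ℂ E.carrier y).continuous.tendsto s).comp hs)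
  refine tendsto_nhds_unique h1 (h2.congr fun n => ?_)
  exact ((adjOf_spec (v n)) x y).symm

instance : CompleteSpace (AdjAlg E) := isClosed_adjAlg.completeSpace_coe

noncomputable instance : CStarAlgebra (AdjAlg E) where

/-- rank one operators -/
noncomputable def rankOne (x w : E.carrier) : E.carrier →L[ℂ] E.carrier :=
  LinearMap.mkContinuous
    { toFun := fun z => E.smulB x (E.inner w z)
      map_add' := fun y z => by rw [E.inner_add_right, E.smulB_add]
      map_smul' := fun c z => by rw [E.inner_smul_right, smulB_smul]; rfl }
    (‖x‖ * ‖w‖) (fun z => by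
      refine (norm_smulB_le E _ _).trans ?_
      rw [mul_assoc]
      gcongr
      exact E.norm_inner_le _ _)

lemma rankOne_apply (x w z : E.carrier) : rankOne x w z = E.smulB x (E.inner w z) := rfl

lemma rankOne_adj (x w : E.carrier) : IsAdjPair E (rankOne x w) (rankOne w x) := by
  intro y z
  rw [rankOne_apply, rankOne_apply, inner_smulB_left, E.inner_smulB_right, E.star_inner]

/-- rank one operators as elements of the C*-algebra -/
noncomputable def rankOneA (x w : E.carrier) : AdjAlg E := ⟨rankOne x w, _, rankOne_adj x w⟩

lemma star_rankOneA (x w : E.carrier) : star (rankOneA x w) = rankOneA w x := by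
  apply Subtype.ext
  exact (adjOf_spec (rankOneA x w)).unique (rankOne_adj x w)

lemma norm_add_ge {A : Type*} [CStarAlgebra A] (a b : A) :
    ‖star a * a‖ ≤ ‖star a * a + star b * b‖ := by
  let _ := CStarAlgebra.spectralOrder A
  have := CStarAlgebra.spectralOrderedRing A
  exact CStarAlgebra.norm_le_norm_of_nonneg_of_le (star_mul_self_nonneg a)
    (le_add_of_nonneg_right (star_mul_self_nonneg b))

/-- The key positivity property. -/
lemma norm_sq_le_add (x y : E.carrier) : ‖x‖ ^ 2 ≤ ‖E.inner x x + E.inner y y‖ := by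
  rcases (norm_nonneg x).eq_or_lt with h0 | h0
  · rw [← h0]; simp
  set c := ‖E.inner x x + E.inner y y‖ with hc
  have h1 := norm_add_ge (rankOneA x x) (rankOneA y x)
  have h2 : ‖star (rankOneA x x) * rankOneA x x + star (rankOneA y x) * rankOneA y x‖
      ≤ ‖x‖ * c * ‖x‖ := by
    refine ContinuousLinearMap.opNorm_le_bound _ (by positivity) fun z => ?_
    have e : ((star (rankOneA x x) * rankOneA x x + star (rankOneA y x) * rankOneA y x :
        AdjAlg E) : E.carrier →L[ℂ] E.carrier) z
        = E.smulB x ((E.inner x x + E.inner y y) * E.inner x z) := by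
      rw [star_rankOneA, star_rankOneA]
      change rankOne x x (rankOne x x z) + rankOne x y (rankOne y x z) = _
      simp only [rankOne_apply, E.inner_smulB_right]
      rw [← E.smulB_add, add_mul]
    refine (congrArg norm e).le.trans ?_
    calc _ ≤ ‖x‖ * ‖(E.inner x x + E.inner y y) * E.inner x z‖ := norm_smulB_le E _ _
      _ ≤ ‖x‖ * (c * (‖x‖ * ‖z‖)) := by
        gcongr
        refine (norm_mul_le _ _).trans ?_
        gcongr
        exact E.norm_inner_le _ _
      _ = _ := by ring
  have h3 : ‖x‖ ^ 2 ≤ ‖rankOneA x x‖ := by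
    have h4 : ‖rankOne x x x‖ ≤ ‖rankOneA x x‖ * ‖x‖ := (rankOne x x).le_opNorm x
    have h5 : ‖rankOne x x x‖ = ‖x‖ ^ 3 := by
      have : ‖rankOne x x x‖ ^ 2 = (‖x‖ ^ 3) ^ 2 := by
        rw [rankOne_apply, E.norm_sq_eq, E.inner_smulB_right, inner_smulB_left, E.star_inner]
        have hs : star (E.inner x x) = E.inner x x := E.star_inner x x
        have e1 : ‖E.inner x x * E.inner x x * E.inner x x‖ = ‖E.inner x x‖ ^ 3 := by
          set a := E.inner x x
          have hsa : IsSelfAdjoint a := hs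
          have h7 : ‖a * a‖ = ‖a‖ * ‖a‖ := by
            have := CStarRing.norm_star_mul_self (x := a)
            rwa [hs] at this
          have h8 : ‖a * a * (a * a)‖ = ‖a * a‖ * ‖a * a‖ := by
            have := CStarRing.norm_star_mul_self (x := a * a)
            rwa [star_mul, hs] at this
          have h9 : ‖a * a * (a * a)‖ ≤ ‖a * a * a‖ * ‖a‖ := by
            rw [← mul_assoc]
            exact norm_mul_le _ _
          have ha : 0 < ‖a‖ := by
            rw [← E.norm_sq_eq]; positivity
          refine le_antisymm ?_ ?_
          · calc ‖a * a * a‖ ≤ ‖a * a‖ * ‖a‖ := norm_mul_le _ _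
              _ = ‖a‖ ^ 3 := by rw [h7]; ring
          · refine le_of_mul_le_mul_right ?_ ha
            calc ‖a‖ ^ 3 * ‖a‖ = ‖a * a * (a * a)‖ := by rw [h8, h7]; ring
              _ ≤ _ := h9
        rw [e1, ← E.norm_sq_eq]; ring
      exact (pow_left_inj₀ (norm_nonneg _) (by positivity) two_ne_zero).1 this
    rw [h5] at h4
    have : ‖x‖ ^ 2 * ‖x‖ ≤ ‖rankOneA x x‖ * ‖x‖ := by linarith [h4, pow_succ ‖x‖ 2]
    exact le_of_mul_le_mul_right this h0
  rw [CStarRing.norm_star_mul_self] at h1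
  have h6 : ‖x‖ ^ 2 * ‖x‖ ^ 2 ≤ ‖x‖ ^ 2 * c := by
    calc _ ≤ ‖rankOneA x x‖ * ‖rankOneA x x‖ := by gcongr
      _ ≤ _ := h1
      _ ≤ _ := h2
      _ = _ := by ring
  exact le_of_mul_le_mul_left h6 (by positivity)

end cstar

end UKK

namespace UKK

/-! ### Symmetric operators with respect to a definite form -/

section forms

/-- A hermitian `B`-valued form which defines the topology of `X`. -/
structure HForm (X : Type) [NormedAddCommGroup X] [NormedSpace ℂ X]
    (B : Type) [NonUnitalCStarAlgebra B] where
  φ : X → X → B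
  add_right : ∀ x y z, φ x (y + z) = φ x y + φ x z
  smul_right : ∀ x (c : ℂ) y, φ x (c • y) = c • φ x y
  star_eq : ∀ x y, star (φ x y) = φ y x
  C : ℝ
  C_pos : 0 < C
  upper : ∀ x y, ‖φ x y‖ ≤ C * ‖x‖ * ‖y‖
  lower : ∀ x, ‖x‖ ^ 2 ≤ ‖φ x x‖

variable {X : Type} [NormedAddCommGroup X] [NormedSpace ℂ X]
  {B : Type} [NonUnitalCStarAlgebra B] (F : HForm X B)

namespace HForm

lemma add_left (x y z : X) : F.φ (x + y) z = F.φ x z + F.φ y z := by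
  rw [← F.star_eq z (x + y), F.add_right, star_add, F.star_eq, F.star_eq]

lemma smul_left (c : ℂ) (x z : X) : F.φ (c • x) z = star c • F.φ x z := by
  rw [← F.star_eq z (c • x), F.smul_right, star_smul, F.star_eq]

lemma sub_right (x y z : X) : F.φ x (y - z) = F.φ x y - F.φ x z := by
  have h := F.smul_right x (-1) z
  rw [sub_eq_add_neg, F.add_right, ← neg_one_smul ℂ z, h, neg_one_smul, sub_eq_add_neg]

/-- symmetric graphs -/
def Symm (G : Submodule ℂ (X × X)) : Prop := ∀ p ∈ G, ∀ q ∈ G, F.φ p.2 q.1 = F.φ p.1 q.2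

end HForm

/-- surjectivity of `G + iμ` -/
def Surj (G : Submodule ℂ (X × X)) (μ : ℝ) : Prop :=
  ∀ f : X, ∃ p ∈ G, p.2 + ((μ : ℂ) * Complex.I) • p.1 = f

variable {F}

lemma HForm.Symm.bound {G : Submodule ℂ (X × X)} (h : F.Symm G) (μ : ℝ) {p : X × X}
    (hp : p ∈ G) : |μ| * ‖p.1‖ ≤ F.C * ‖p.2 + ((μ : ℂ) * Complex.I) • p.1‖ := by
  set f := p.2 + ((μ : ℂ) * Complex.I) • p.1 with hf
  have e1 : F.φ p.1 f = F.φ p.1 p.2 + ((μ : ℂ) * Complex.I) • F.φ p.1 p.1 := by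
    rw [hf, F.add_right, F.smul_right]
  have e2 : F.φ f p.1 = F.φ p.1 p.2 - ((μ : ℂ) * Complex.I) • F.φ p.1 p.1 := by
    rw [hf, F.add_left, F.smul_left, h p hp p hp, sub_eq_add_neg, ← neg_smul]
    simp
  have e3 : (2 * ((μ : ℂ) * Complex.I)) • F.φ p.1 p.1 = F.φ p.1 f - F.φ f p.1 := by
    rw [e1, e2]; module
  have h1 : ‖(2 * ((μ : ℂ) * Complex.I)) • F.φ p.1 p.1‖ ≤ 2 * (F.C * ‖p.1‖ * ‖f‖) := by
    rw [e3]
    refine (norm_sub_le _ _).trans ?_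
    have a := F.upper p.1 f
    have b := F.upper f p.1
    nlinarith
  rw [norm_smul] at h1
  have h2 : ‖(2 * ((μ : ℂ) * Complex.I))‖ = 2 * |μ| := by simp
  rw [h2] at h1
  have h3 := F.lower p.1
  have h4 : (|μ| * ‖p.1‖) * ‖p.1‖ ≤ (F.C * ‖f‖) * ‖p.1‖ := by
    nlinarith [abs_nonneg μ]
  rcases (norm_nonneg p.1).eq_or_lt with h0 | h0
  · rw [← h0]
    have := F.C_pos
    have : 0 ≤ F.C * ‖f‖ := by positivity
    simpa using this
  · exact le_of_mul_le_mul_right h4 h0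

/-- the range of `G + iμ` -/
def rangeSub (G : Submodule ℂ (X × X)) (μ : ℝ) : Submodule ℂ X :=
  G.map (LinearMap.snd ℂ X X + ((μ : ℂ) * Complex.I) • LinearMap.fst ℂ X X)

lemma mem_rangeSub {G : Submodule ℂ (X × X)} {μ : ℝ} {f : X} :
    f ∈ rangeSub G μ ↔ ∃ p ∈ G, p.2 + ((μ : ℂ) * Complex.I) • p.1 = f := by
  simp [rangeSub, Submodule.mem_map]

lemma surj_of_dense [CompleteSpace X] {G : Submodule ℂ (X × X)} (h : F.Symm G)
    (hc : IsClosed (G : Set (X × X))) {μ : ℝ} (hμ : μ ≠ 0)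
    (hd : Dense (rangeSub G μ : Set X)) : Surj G μ := by
  intro f
  obtain ⟨u, hu, hlim⟩ := mem_closure_iff_seq_limit.1 (hd f)
  have hu' : ∀ n, ∃ p ∈ G, p.2 + ((μ : ℂ) * Complex.I) • p.1 = u n :=
    fun n => mem_rangeSub.1 (hu n)
  choose p hp hpu using hu'
  have hμ' : 0 < |μ| := abs_pos.2 hμ
  have hcau : CauchySeq (fun n => (p n).1) := by
    have h0 : CauchySeq u := hlim.cauchySeq
    rw [Metric.cauchySeq_iff] at h0 ⊢
    intro ε hε
    have hC := F.C_pos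
    obtain ⟨N, hN⟩ := h0 (|μ| * ε / F.C) (by positivity)
    refine ⟨N, fun m hm n hn => ?_⟩
    have h1 := hN m hm n hn
    rw [dist_eq_norm] at h1 ⊢
    have h2 := h.bound μ (G.sub_mem (hp m) (hp n))
    have e : (p m - p n).2 + ((μ : ℂ) * Complex.I) • (p m - p n).1 = u m - u n := by
      rw [← hpu, ← hpu, Prod.snd_sub, Prod.fst_sub]; module
    rw [e, Prod.fst_sub] at h2
    rw [lt_div_iff₀ hC] at h1
    have : |μ| * ‖(p m).1 - (p n).1‖ < |μ| * ε := by linarith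
    exact lt_of_mul_lt_mul_left this hμ'.le
  obtain ⟨x, hx⟩ := cauchySeq_tendsto_of_complete hcau
  have h2 : Filter.Tendsto (fun n => (p n).2) Filter.atTop
      (nhds (f - ((μ : ℂ) * Complex.I) • x)) := by
    refine (hlim.sub (hx.const_smul ((μ : ℂ) * Complex.I))).congr fun n => ?_
    rw [← hpu]; simp
  have h3 : (x, f - ((μ : ℂ) * Complex.I) • x) ∈ G :=
    hc.mem_of_tendsto (hx.prodMk_nhds h2) (Filter.Eventually.of_forall hp)
  exact ⟨_, h3, by simp⟩

/-- bounded perturbation of a graph -/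
def pert (G : Submodule ℂ (X × X)) (A : X →L[ℂ] X) : Submodule ℂ (X × X) :=
  G.comap ((LinearMap.fst ℂ X X).prod (LinearMap.snd ℂ X X - A.toLinearMap ∘ₗ LinearMap.fst ℂ X X))

lemma mem_pert {G : Submodule ℂ (X × X)} {A : X →L[ℂ] X} {p : X × X} :
    p ∈ pert G A ↔ (p.1, p.2 - A p.1) ∈ G := by
  simp [pert]

lemma pert_closed {G : Submodule ℂ (X × X)} {A : X →L[ℂ] X} (hc : IsClosed (G : Set (X × X))) :
    IsClosed (pert G A : Set (X × X)) := by
  have : (pert G A : Set (X × X)) = (fun p : X × X => (p.1, p.2 - A p.1)) ⁻¹' (G : Set (X × X)) := by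
    ext p; exact mem_pert
  rw [this]
  exact hc.preimage (by fun_prop)

lemma pert_symm {G : Submodule ℂ (X × X)} {A : X →L[ℂ] X} (h : F.Symm G)
    (hA : ∀ x y, F.φ (A x) y = F.φ x (A y)) : F.Symm (pert G A) := by
  intro p hp q hq
  have h1 := h _ (mem_pert.1 hp) _ (mem_pert.1 hq)
  have e1 : F.φ p.2 q.1 = F.φ (p.2 - A p.1) q.1 + F.φ (A p.1) q.1 := by
    rw [← F.add_left]; simp
  have e2 : F.φ p.1 q.2 = F.φ p.1 (q.2 - A q.1) + F.φ p.1 (A q.1) := by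
    rw [← F.add_right]; simp
  rw [e1, e2, hA, h1]

/-- A small perturbation of a surjective (bounded below) operator has dense range. -/
lemma surj_pert [CompleteSpace X] {G : Submodule ℂ (X × X)} (h : F.Symm G)
    {μ : ℝ} (hμ : μ ≠ 0) (hs : Surj G μ) (A : X →L[ℂ] X) (hA : F.C * ‖A‖ < |μ|) (f : X) :
    ∃ p ∈ G, p.2 + ((μ : ℂ) * Complex.I) • p.1 + A p.1 = f := by
  choose p hp hpf using hs
  have hμ' : 0 < |μ| := abs_pos.2 hμ
  have hC := F.C_pos
  have huniq : ∀ q ∈ G, ∀ g, q.2 + ((μ : ℂ) * Complex.I) • q.1 = g → q.1 = (p g).1 := by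
    intro q hq g hg
    have h2 := h.bound μ (G.sub_mem hq (hp g))
    have e : (q - p g).2 + ((μ : ℂ) * Complex.I) • (q - p g).1 = 0 := by
      have : (q - p g).2 + ((μ : ℂ) * Complex.I) • (q - p g).1
          = (q.2 + ((μ : ℂ) * Complex.I) • q.1)
            - ((p g).2 + ((μ : ℂ) * Complex.I) • (p g).1) := by
        rw [Prod.snd_sub, Prod.fst_sub]; module
      rw [this, hg, hpf, sub_self]
    rw [e, norm_zero, mul_zero] at h2
    have h3 : ‖(q - p g).1‖ ≤ 0 := by
      by_contra hcon
      push Not at hcon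
      have := mul_pos hμ' hcon
      linarith
    have := norm_le_zero_iff.1 h3
    exact sub_eq_zero.1 this
  let r : X →ₗ[ℂ] X :=
    { toFun := fun g => (p g).1
      map_add' := fun g g' => by
        refine (huniq _ (G.add_mem (hp g) (hp g')) _ ?_).symm
        nth_rewrite 3 [← hpf g]
        nth_rewrite 3 [← hpf g']
        rw [Prod.snd_add, Prod.fst_add]; module
      map_smul' := fun c g => by
        refine (huniq _ (G.smul_mem c (hp g)) _ ?_).symm
        nth_rewrite 3 [← hpf g]
        simp only [Prod.smul_snd, Prod.smul_fst]; module }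
  have hr : ∀ g, ‖r g‖ ≤ (F.C / |μ|) * ‖g‖ := by
    intro g
    have h2 := h.bound μ (hp g)
    rw [hpf] at h2
    rw [div_mul_eq_mul_div, le_div_iff₀ hμ', mul_comm]
    exact h2
  let r' : X →L[ℂ] X := r.mkContinuous _ hr
  have hn : ‖A * r'‖ < 1 := by
    calc ‖A * r'‖ ≤ ‖A‖ * ‖r'‖ := norm_mul_le _ _
      _ ≤ ‖A‖ * (F.C / |μ|) := by
        gcongr
        exact LinearMap.mkContinuous_norm_le _ (by positivity) _
      _ < 1 := by
        rw [mul_div_assoc', div_lt_one hμ']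
        linarith
  -- solve `g + A r g = f`
  have hu : IsUnit (1 + A * r') := by
    have := isUnit_one_sub_of_norm_lt_one (x := -(A * r')) (by rwa [norm_neg])
    rwa [sub_neg_eq_add] at this
  obtain ⟨u, hu⟩ := hu
  have hg : (1 + A * r') ((↑u⁻¹ : X →L[ℂ] X) f) = f := by
    rw [← hu]
    change ((↑u * ↑u⁻¹ : X →L[ℂ] X)) f = f
    rw [Units.mul_inv]; rfl
  set g := (↑u⁻¹ : X →L[ℂ] X) f
  refine ⟨p g, hp g, ?_⟩
  rw [hpf]
  exact hg

lemma surj_near [CompleteSpace X] {G : Submodule ℂ (X × X)} (h : F.Symm G)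
    {μ ν : ℝ} (hμ : μ ≠ 0) (hs : Surj G μ) (hν : F.C * |ν - μ| < |μ|) : Surj G ν := by
  intro f
  have hb : ‖(((ν : ℂ) - μ) * Complex.I) • (1 : X →L[ℂ] X)‖ ≤ |ν - μ| := by
    refine ContinuousLinearMap.opNorm_le_bound _ (abs_nonneg _) fun x => ?_
    have : ((ν : ℂ) - μ) = ((ν - μ : ℝ) : ℂ) := by push_cast; ring
    rw [this]
    change ‖((((ν - μ : ℝ) : ℂ)) * Complex.I) • x‖ ≤ _
    rw [norm_smul, norm_mul, Complex.norm_I, mul_one, Complex.norm_real, Real.norm_eq_abs]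
  obtain ⟨p, hp, hpf⟩ := surj_pert h hμ hs ((((ν : ℂ) - μ) * Complex.I) • 1) (by
    have := mul_le_mul_of_nonneg_left hb F.C_pos.le
    linarith) f
  refine ⟨p, hp, ?_⟩
  rw [← hpf]
  change _ = _ + (((ν : ℂ) - μ) * Complex.I) • p.1
  module

lemma surj_all [CompleteSpace X] {G : Submodule ℂ (X × X)} (h : F.Symm G)
    {μ ν : ℝ} (hμ : μ ≠ 0) (hs : Surj G μ) (hν : 0 < ν / μ) : Surj G ν := by
  -- work with ratios `t = ν / μ`
  have hC := F.C_pos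
  obtain ⟨a, ha0, ha1, haC⟩ : ∃ a : ℝ, 0 < a ∧ a < 1 ∧ F.C * a < 1 := by
    refine ⟨1 / (F.C + 1 + 1), by positivity, ?_, ?_⟩
    · rw [div_lt_one (by positivity)]; linarith
    · rw [mul_one_div, div_lt_one (by positivity)]; linarith
  have step : ∀ s t : ℝ, 0 < s → |t - s| ≤ a * s → Surj G (s * μ) → Surj G (t * μ) := by
    intro s t hs0 hts hS
    refine surj_near h (mul_ne_zero hs0.ne' hμ) hS ?_
    rw [← sub_mul, abs_mul, abs_mul, abs_of_pos hs0]
    have hμ' : 0 < |μ| := abs_pos.2 hμ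
    have : F.C * |t - s| < s := by nlinarith
    nlinarith
  have main : ∀ n : ℕ, ∀ t : ℝ, (1 - a) ^ n ≤ t → t ≤ (1 + a) ^ n → Surj G (t * μ) := by
    intro n
    induction n with
    | zero =>
      intro t h1 h2
      have : t = 1 := le_antisymm (by simpa using h2) (by simpa using h1)
      simpa [this] using hs
    | succ n ih =>
      intro t h1 h2
      have hlow : 0 < (1 - a) ^ n := pow_pos (by linarith) n
      have hle : (1 - a) ^ n ≤ 1 := pow_le_one₀ (by linarith) (by linarith)
      have hge : 1 ≤ (1 + a) ^ n := one_le_pow₀ (by linarith)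
      rw [pow_succ] at h1 h2
      by_cases hc1 : t < (1 - a) ^ n
      · refine step _ t hlow ?_ (ih _ le_rfl (by linarith))
        rw [abs_le]; constructor <;> nlinarith
      · by_cases hc2 : (1 + a) ^ n < t
        · refine step _ t (by linarith) ?_ (ih _ (by linarith) le_rfl)
          rw [abs_le]; constructor <;> nlinarith
        · exact ih t (by linarith) (by linarith)
  obtain ⟨n, hn⟩ : ∃ n : ℕ, (1 - a) ^ n < ν / μ := exists_pow_lt_of_lt_one hν (by linarith)
  obtain ⟨m, hm⟩ : ∃ m : ℕ, ν / μ < (1 + a) ^ m := pow_unbounded_of_one_lt _ (by linarith)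
  have := main (n + m) (ν / μ) ?_ ?_
  · rwa [div_mul_cancel₀ _ hμ] at this
  · refine le_trans ?_ hn.le
    exact pow_le_pow_of_le_one (by linarith) (by linarith) (by omega)
  · refine hm.le.trans ?_
    exact pow_le_pow_right₀ (by linarith) (by omega)

/-- perturbation of a symmetric operator by a bounded symmetric operator -/
lemma surj_pert_symm [CompleteSpace X] {G : Submodule ℂ (X × X)} (h : F.Symm G)
    (hs : ∀ μ : ℝ, μ ≠ 0 → Surj G μ) (A : X →L[ℂ] X)
    (hA : ∀ x y, F.φ (A x) y = F.φ x (A y)) (μ : ℝ) (hμ : μ ≠ 0) : Surj (pert G A) μ := by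
  have hC := F.C_pos
  set k : ℝ := (F.C * ‖A‖ + 1) / |μ| with hk
  have hμ' : 0 < |μ| := abs_pos.2 hμ
  have hkpos : 0 < k := by positivity
  have h1 : Surj (pert G A) (k * μ) := by
    intro f
    have hkμ : k * μ ≠ 0 := mul_ne_zero hkpos.ne' hμ
    obtain ⟨p, hp, hpf⟩ := surj_pert h hkμ (hs _ hkμ) A (by
      rw [abs_mul, abs_of_pos hkpos, hk, div_mul_cancel₀ _ hμ'.ne']; linarith) f
    refine ⟨(p.1, p.2 + A p.1), mem_pert.2 (by simpa using hp), ?_⟩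
    rw [← hpf]; simp only; abel
  refine surj_all (pert_symm h hA) (mul_ne_zero hkpos.ne' hμ) h1 ?_
  rw [mul_comm, div_mul_cancel_left₀ hμ]
  positivity

lemma mem_of_adjoint {G : Submodule ℂ (X × X)}  {μ : ℝ}
    (hs : Surj G μ) (hs' : Surj G (-μ)) (q : X × X)
    (hq : ∀ p ∈ G, F.φ p.2 q.1 = F.φ p.1 q.2) (h : F.Symm G) : q ∈ G := by
  obtain ⟨p, hp, hpq⟩ := hs (q.2 + ((μ : ℂ) * Complex.I) • q.1)
  set d := q.1 - p.1 with hd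
  have e2 : q.2 - p.2 = -(((μ : ℂ) * Complex.I) • d) := by
    have : q.2 - p.2 = ((μ : ℂ) * Complex.I) • p.1 - ((μ : ℂ) * Complex.I) • q.1 := by
      rw [sub_eq_sub_iff_add_eq_add, ← hpq]; abel
    rw [this, hd]; module
  obtain ⟨p', hp', hpd⟩ := hs' d
  have h1 : F.φ p'.2 d = F.φ p'.1 (-(((μ : ℂ) * Complex.I) • d)) := by
    rw [← e2, hd, F.sub_right, F.sub_right, hq p' hp', h p' hp' p hp]
  have h2 : F.φ d d = 0 := by
    have : F.φ (p'.2 + (((-μ : ℝ) : ℂ) * Complex.I) • p'.1) d = 0 := by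
      rw [F.add_left, F.smul_left, h1, ← neg_smul, F.smul_right, ← add_smul]
      simp
    rwa [hpd] at this
  have h3 : d = 0 := by
    have := F.lower d
    rw [h2, norm_zero] at this
    have h4 : ‖d‖ = 0 := by nlinarith [norm_nonneg d]
    exact norm_eq_zero.1 h4
  have : q = p := by
    rw [h3, smul_zero, neg_zero] at e2
    exact Prod.ext (sub_eq_zero.1 h3) (sub_eq_zero.1 e2)
  rw [this]; exact hp

/-- density criterion -/
lemma dense_of_approx (V : Submodule ℂ X)
    (h : ∀ v : X, v ≠ 0 → ∃ u ∈ V, ‖v - u‖ < 3 / 4 * ‖v‖) : Dense (V : Set X) := by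
  by_contra hcon
  have hex : ∃ x : X, x ∉ V.topologicalClosure := by
    by_contra hall
    push Not at hall
    exact hcon fun x => hall x
  obtain ⟨x₀, hx₀, hx⟩ := riesz_lemma (𝕜 := ℂ) (F := V.topologicalClosure)
    V.isClosed_topologicalClosure hex (r := 3 / 4) (by norm_num)
  obtain ⟨u, hu, huv⟩ := h x₀ (by rintro rfl; exact hx₀ (Submodule.zero_mem _))
  have := hx u (V.le_topologicalClosure hu)
  linarith

end forms

end UKK

namespace UKK

/-! ### Resolvents -/

section resolvents

variable {B : Type} [NonUnitalCStarAlgebra B] (E : HilbMod B)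

/-- the form of a Hilbert module -/
noncomputable def modForm : HForm E.carrier B where
  φ := E.inner
  add_right := E.inner_add_right
  smul_right := E.inner_smul_right
  star_eq := E.star_inner
  C := 1
  C_pos := one_pos
  upper := fun x y => by rw [one_mul]; exact E.norm_inner_le x y
  lower := fun x => (E.norm_sq_eq x).le

/-- the form on `E ⊕ E` -/
noncomputable def modForm2 : HForm (E.carrier × E.carrier) B where
  φ := fun u v => E.inner u.1 v.1 + E.inner u.2 v.2
  add_right := fun u v w => by
    simp only [Prod.fst_add, Prod.snd_add, E.inner_add_right]; abel
  smul_right := fun u c v => by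
    simp only [Prod.smul_fst, Prod.smul_snd, E.inner_smul_right, smul_add]
  star_eq := fun u v => by rw [star_add, E.star_inner, E.star_inner]
  C := 2
  C_pos := two_pos
  upper := fun u v => by
    have h1 := E.norm_inner_le u.1 v.1
    have h2 := E.norm_inner_le u.2 v.2
    have h3 : ‖u.1‖ * ‖v.1‖ ≤ ‖u‖ * ‖v‖ :=
      mul_le_mul (norm_fst_le u) (norm_fst_le v) (norm_nonneg _) (norm_nonneg _)
    have h4 : ‖u.2‖ * ‖v.2‖ ≤ ‖u‖ * ‖v‖ :=
      mul_le_mul (norm_snd_le u) (norm_snd_le v) (norm_nonneg _) (norm_nonneg _)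
    have h5 := norm_add_le (E.inner u.1 v.1) (E.inner u.2 v.2)
    linarith
  lower := fun u => by
    rcases max_choice ‖u.1‖ ‖u.2‖ with h | h
    · rw [Prod.norm_def, h]; exact norm_sq_le_add u.1 u.2
    · rw [Prod.norm_def, h, add_comm]; exact norm_sq_le_add u.2 u.1

/-- the off-diagonal operator `[[0, G₁], [G₀, 0]]` -/
def offdiag (G₀ G₁ : Submodule ℂ (E.carrier × E.carrier)) :
    Submodule ℂ ((E.carrier × E.carrier) × (E.carrier × E.carrier)) where
  carrier := {p | (p.1.1, p.2.2) ∈ G₀ ∧ (p.1.2, p.2.1) ∈ G₁}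
  add_mem' := fun {a b} ha hb => ⟨G₀.add_mem ha.1 hb.1, G₁.add_mem ha.2 hb.2⟩
  zero_mem' := ⟨G₀.zero_mem, G₁.zero_mem⟩
  smul_mem' := fun c _ ha => ⟨G₀.smul_mem c ha.1, G₁.smul_mem c ha.2⟩

/-- the sum as a submodule -/
def sumSub (S T : Submodule ℂ (E.carrier × E.carrier)) :
    Submodule ℂ (E.carrier × E.carrier) where
  carrier := sumGraph E E S T
  add_mem' := by
    rintro a b ⟨y₁, y₂, h1, h2, h3⟩ ⟨z₁, z₂, k1, k2, k3⟩
    refine ⟨y₁ + z₁, y₂ + z₂, S.add_mem h1 k1, T.add_mem h2 k2, ?_⟩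
    rw [Prod.snd_add, h3, k3]; abel
  zero_mem' := ⟨0, 0, S.zero_mem, T.zero_mem, by simp⟩
  smul_mem' := by
    rintro c a ⟨y₁, y₂, h1, h2, h3⟩
    refine ⟨c • y₁, c • y₂, S.smul_mem c h1, T.smul_mem c h2, ?_⟩
    rw [Prod.smul_snd, h3, smul_add]

/-- the adjoint as a submodule -/
def adjSub (G : Set (E.carrier × E.carrier)) : Submodule ℂ (E.carrier × E.carrier) where
  carrier := adjointGraph E E G
  add_mem' := by
    intro a b ha hb p hp
    rw [Prod.snd_add, Prod.fst_add, E.inner_add_right, E.inner_add_right, ha p hp, hb p hp]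
  zero_mem' := by
    intro p hp
    simp [inner_zero_right]
  smul_mem' := by
    intro c a ha p hp
    rw [Prod.smul_snd, Prod.smul_fst, E.inner_smul_right, E.inner_smul_right, ha p hp]

lemma isClosed_adjointGraph (G : Set (E.carrier × E.carrier)) :
    IsClosed (adjointGraph E E G) := by
  have : adjointGraph E E G = ⋂ p ∈ G, {q | E.inner p.2 q.1 = E.inner p.1 q.2} := by
    ext q; simp [adjointGraph]
  rw [this]
  refine isClosed_biInter fun p _ => isClosed_eq ?_ ?_
  · exact (continuous_inner_right E p.2).comp continuous_fst
  · exact (continuous_inner_right E p.1).comp continuous_snd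

variable {E}

lemma offdiag_closed {G₀ G₁ : Submodule ℂ (E.carrier × E.carrier)}
    (h0 : IsClosed (G₀ : Set (E.carrier × E.carrier)))
    (h1 : IsClosed (G₁ : Set (E.carrier × E.carrier))) :
    IsClosed (offdiag E G₀ G₁ : Set ((E.carrier × E.carrier) × (E.carrier × E.carrier))) :=
  (h0.preimage (f := fun p : (E.carrier × E.carrier) × (E.carrier × E.carrier) =>
    (p.1.1, p.2.2)) (by fun_prop)).inter
  (h1.preimage (f := fun p : (E.carrier × E.carrier) × (E.carrier × E.carrier) =>
    (p.1.2, p.2.1)) (by fun_prop))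

lemma offdiag_symm {G₀ G₁ : Submodule ℂ (E.carrier × E.carrier)}
    (h : (G₁ : Set (E.carrier × E.carrier)) ⊆ adjointGraph E E G₀) :
    (modForm2 E).Symm (offdiag E G₀ G₁) := by
  intro p hp q hq
  have h1 := h hq.2 _ hp.1
  have h2 := h hp.2 _ hq.1
  change E.inner p.2.1 q.1.1 + E.inner p.2.2 q.1.2 = E.inner p.1.1 q.2.1 + E.inner p.1.2 q.2.2
  have h3 := congrArg star h2
  rw [E.star_inner, E.star_inner] at h3
  simp only at h1 h3
  rw [h1, ← h3, add_comm]

variable (E)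

/-- The resolvents of a symmetric operator `S`. -/
structure Res (S : Submodule ℂ (E.carrier × E.carrier)) where
  r : ℝ → E.carrier →L[ℂ] E.carrier
  mem : ∀ μ : ℝ, μ ≠ 0 → ∀ x, (r μ x, x - ((μ : ℂ) * Complex.I) • r μ x) ∈ S
  uniq : ∀ μ : ℝ, μ ≠ 0 → ∀ p ∈ S, r μ (p.2 + ((μ : ℂ) * Complex.I) • p.1) = p.1
  bound : ∀ μ : ℝ, μ ≠ 0 → ∀ x, |μ| * ‖r μ x‖ ≤ ‖x‖
  adj : ∀ μ : ℝ, μ ≠ 0 → ∀ x y, E.inner (r μ x) y = E.inner x (r (-μ) y)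

variable {E}

lemma exists_res {S : Submodule ℂ (E.carrier × E.carrier)} (hS : (modForm E).Symm S)
    (hs : ∀ μ : ℝ, μ ≠ 0 → Surj S μ) : Nonempty (Res E S) := by
  have hex : ∀ μ : ℝ, ∃ r : E.carrier →L[ℂ] E.carrier, μ ≠ 0 →
      ((∀ x, (r x, x - ((μ : ℂ) * Complex.I) • r x) ∈ S) ∧
       (∀ p ∈ S, r (p.2 + ((μ : ℂ) * Complex.I) • p.1) = p.1) ∧
       (∀ x, |μ| * ‖r x‖ ≤ ‖x‖)) := by
    intro μ
    by_cases hμ : μ = 0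
    · exact ⟨0, fun h => absurd hμ h⟩
    have hμ' : 0 < |μ| := abs_pos.2 hμ
    have hb : ∀ p ∈ S, |μ| * ‖p.1‖ ≤ ‖p.2 + ((μ : ℂ) * Complex.I) • p.1‖ := by
      intro p hp
      have := hS.bound μ hp
      change _ ≤ 1 * _ at this
      rwa [one_mul] at this
    have hz : ∀ p ∈ S, p.2 + ((μ : ℂ) * Complex.I) • p.1 = 0 → p.1 = 0 := by
      intro p hp h0
      have := hb p hp
      rw [h0, norm_zero] at this
      have h3 : ‖p.1‖ ≤ 0 := by
        by_contra hcon
        push Not at hcon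
        have := mul_pos hμ' hcon
        linarith
      exact norm_le_zero_iff.1 h3
    have hu : ∀ p ∈ S, ∀ q ∈ S, p.2 + ((μ : ℂ) * Complex.I) • p.1
        = q.2 + ((μ : ℂ) * Complex.I) • q.1 → p.1 = q.1 := by
      intro p hp q hq h
      refine sub_eq_zero.1 (hz (p - q) (S.sub_mem hp hq) ?_)
      rw [← sub_eq_zero] at h
      rw [← h, Prod.snd_sub, Prod.fst_sub]; module
    choose p hp hpf using hs μ hμ
    let r : E.carrier →ₗ[ℂ] E.carrier :=
      { toFun := fun g => (p g).1
        map_add' := fun g g' => by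
          refine hu _ (hp _) _ (S.add_mem (hp g) (hp g')) ?_
          rw [hpf]
          conv_lhs => rw [← hpf g, ← hpf g']
          rw [Prod.snd_add, Prod.fst_add]; module
        map_smul' := fun c g => by
          refine hu _ (hp _) _ (S.smul_mem c (hp g)) ?_
          rw [hpf]
          conv_lhs => rw [← hpf g]
          rw [Prod.smul_snd, Prod.smul_fst]; module }
    have hrb : ∀ x, |μ| * ‖r x‖ ≤ ‖x‖ := by
      intro x
      have := hb _ (hp x)
      rwa [hpf] at this
    refine ⟨r.mkContinuous (1 / |μ|) (fun x => ?_), fun _ => ⟨fun x => ?_, fun q hq => ?_, hrb⟩⟩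
    · rw [div_mul_eq_mul_div, le_div_iff₀ hμ', one_mul, mul_comm]
      exact hrb x
    · have h1 := hp x
      have h2 : x - ((μ : ℂ) * Complex.I) • (p x).1 = (p x).2 := by
        rw [sub_eq_iff_eq_add]; exact (hpf x).symm
      change ((p x).1, x - ((μ : ℂ) * Complex.I) • (p x).1) ∈ S
      rw [h2]; exact h1
    · exact hu _ (hp _) _ hq (hpf _)
  choose r hr using hex
  refine ⟨⟨r, fun μ hμ => (hr μ hμ).1, fun μ hμ => (hr μ hμ).2.1, fun μ hμ => (hr μ hμ).2.2, ?_⟩⟩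
  intro μ hμ x y
  have h1 := (hr μ hμ).1 x
  have h2 := (hr (-μ) (neg_ne_zero.2 hμ)).1 y
  have h3 := hS _ h1 _ h2
  change E.inner _ _ = E.inner _ _ at h3
  simp only at h3
  set a := r μ x
  set b := r (-μ) y
  have e1 : E.inner (x - ((μ : ℂ) * Complex.I) • a) b
      = E.inner x b + ((μ : ℂ) * Complex.I) • E.inner a b := by
    rw [sub_eq_add_neg, ← neg_smul, inner_add_left, inner_smul_left]
    simp
  have e2 : E.inner a (y - (((-μ : ℝ) : ℂ) * Complex.I) • b)
      = E.inner a y + ((μ : ℂ) * Complex.I) • E.inner a b := by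
    rw [sub_eq_add_neg, ← neg_smul, E.inner_add_right, E.inner_smul_right]
    simp
  rw [e1, e2] at h3
  exact (add_right_cancel h3).symm

namespace Res

variable {S : Submodule ℂ (E.carrier × E.carrier)} (ρ : Res E S)

lemma map {μ : ℝ} (hμ : μ ≠ 0) {p : E.carrier × E.carrier} (hp : p ∈ S) :
    ρ.r μ p.2 = p.1 - ((μ : ℂ) * Complex.I) • ρ.r μ p.1 := by
  have := ρ.uniq μ hμ p hp
  rw [map_add, map_smul] at this
  exact eq_sub_of_add_eq this

lemma map_mem {μ : ℝ} (hμ : μ ≠ 0) {p : E.carrier × E.carrier} (hp : p ∈ S) :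
    (ρ.r μ p.1, ρ.r μ p.2) ∈ S := by
  rw [ρ.map hμ hp]
  exact ρ.mem μ hμ p.1

lemma comm {μ ν : ℝ} (hμ : μ ≠ 0) (hν : ν ≠ 0) (x : E.carrier) :
    ρ.r ν (ρ.r μ x) = ρ.r μ (ρ.r ν x) := by
  have h1 := ρ.uniq ν hν _ (ρ.map_mem hμ (ρ.mem ν hν x))
  simp only at h1
  rw [map_sub, map_smul, sub_add_cancel] at h1
  exact h1

lemma norm_J {μ : ℝ} (hμ : μ ≠ 0) (x : E.carrier) :
    ‖((μ : ℂ) * Complex.I) • ρ.r μ x‖ ≤ ‖x‖ := by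
  rw [norm_smul, norm_mul, Complex.norm_I, mul_one, Complex.norm_real, Real.norm_eq_abs]
  exact ρ.bound μ hμ x

lemma J_approx (hd : Dense (gdom (S : Set (E.carrier × E.carrier)))) (x : E.carrier)
    {ε : ℝ} (hε : 0 < ε) : ∃ M : ℝ, 1 ≤ M ∧ ∀ μ : ℝ, M ≤ |μ| →
      ‖((μ : ℂ) * Complex.I) • ρ.r μ x - x‖ < ε := by
  obtain ⟨a, ⟨p, hp, rfl⟩, ha⟩ := Metric.mem_closure_iff.1 (hd x) (ε / 4) (by positivity)
  rw [dist_eq_norm] at ha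
  refine ⟨max 1 (4 * ‖p.2‖ / ε), le_max_left _ _, fun μ hM => ?_⟩
  have h1 : 1 ≤ |μ| := (le_max_left _ _).trans hM
  have h2 : 4 * ‖p.2‖ / ε ≤ |μ| := (le_max_right _ _).trans hM
  have hμ : μ ≠ 0 := by rintro rfl; simp at h1; linarith
  have e : ((μ : ℂ) * Complex.I) • ρ.r μ x - x
      = ((μ : ℂ) * Complex.I) • ρ.r μ (x - p.1) - (x - p.1) - ρ.r μ p.2 := by
    rw [ρ.map hμ hp, map_sub]; module
  rw [e]
  have h3 := ρ.norm_J hμ (x - p.1)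
  have h4 := ρ.bound μ hμ p.2
  have h5 : ‖ρ.r μ p.2‖ ≤ ε / 4 := by
    rw [div_le_iff₀ hε] at h2
    have : |μ| * ‖ρ.r μ p.2‖ ≤ |μ| * (ε / 4) := by linarith
    exact le_of_mul_le_mul_left this (by linarith)
  have h6 := norm_sub_le (((μ : ℂ) * Complex.I) • ρ.r μ (x - p.1) - (x - p.1)) (ρ.r μ p.2)
  have h7 := norm_sub_le (((μ : ℂ) * Complex.I) • ρ.r μ (x - p.1)) (x - p.1)
  linarith

/-- the approximate unit `m² (S² + m²)⁻¹` -/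
noncomputable def D (m : ℝ) : E.carrier →L[ℂ] E.carrier :=
  (1 / 2 : ℂ) • (((m : ℂ) * Complex.I) • ρ.r m - ((m : ℂ) * Complex.I) • ρ.r (-m))

/-- the bounded approximation `m² S (S² + m²)⁻¹` of `S` -/
noncomputable def s (m : ℝ) : E.carrier →L[ℂ] E.carrier :=
  (m ^ 2 / 2 : ℂ) • (ρ.r m + ρ.r (-m))

lemma D_apply (m : ℝ) (x : E.carrier) : ρ.D m x =
    (1 / 2 : ℂ) • (((m : ℂ) * Complex.I) • ρ.r m x - ((m : ℂ) * Complex.I) • ρ.r (-m) x) := rfl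

lemma s_apply (m : ℝ) (x : E.carrier) : ρ.s m x =
    (m ^ 2 / 2 : ℂ) • (ρ.r m x + ρ.r (-m) x) := rfl

lemma norm_D {m : ℝ} (hm : m ≠ 0) (x : E.carrier) : ‖ρ.D m x‖ ≤ ‖x‖ := by
  have h1 := ρ.norm_J hm x
  have h2 := ρ.norm_J (neg_ne_zero.2 hm) x
  have e : ρ.D m x = (1 / 2 : ℂ) • (((m : ℂ) * Complex.I) • ρ.r m x
      + (((-m : ℝ) : ℂ) * Complex.I) • ρ.r (-m) x) := by
    rw [D_apply]; push_cast; module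
  rw [e, norm_smul]
  have h3 := norm_add_le (((m : ℂ) * Complex.I) • ρ.r m x)
    ((((-m : ℝ) : ℂ) * Complex.I) • ρ.r (-m) x)
  have h4 : ‖(1 / 2 : ℂ)‖ = 1 / 2 := by simp
  rw [h4]
  linarith

lemma D_approx (hd : Dense (gdom (S : Set (E.carrier × E.carrier)))) (x : E.carrier)
    {ε : ℝ} (hε : 0 < ε) : ∃ M : ℝ, 1 ≤ M ∧ ∀ μ : ℝ, M ≤ μ →
      ‖ρ.D μ x - x‖ < ε := by
  obtain ⟨M, hM1, hM⟩ := ρ.J_approx hd x hε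
  refine ⟨M, hM1, fun μ hμ => ?_⟩
  have h1 := hM μ (hμ.trans (le_abs_self _))
  have h2 := hM (-μ) (by rw [abs_neg]; exact hμ.trans (le_abs_self _))
  have e : ρ.D μ x - x = (1 / 2 : ℂ) • ((((μ : ℂ) * Complex.I) • ρ.r μ x - x)
      + ((((-μ : ℝ) : ℂ) * Complex.I) • ρ.r (-μ) x - x)) := by
    rw [D_apply]; push_cast; module
  rw [e, norm_smul]
  have h3 := norm_add_le (((μ : ℂ) * Complex.I) • ρ.r μ x - x)
    ((((-μ : ℝ) : ℂ) * Complex.I) • ρ.r (-μ) x - x)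
  have h4 : ‖(1 / 2 : ℂ)‖ = 1 / 2 := by simp
  rw [h4]
  linarith

lemma D_mem {m : ℝ} (hm : m ≠ 0) (x : E.carrier) : (ρ.D m x, ρ.s m x) ∈ S := by
  have h1 := S.smul_mem ((m : ℂ) * Complex.I) (ρ.mem m hm x)
  have h2 := S.smul_mem ((m : ℂ) * Complex.I) (ρ.mem (-m) (neg_ne_zero.2 hm) x)
  have h3 := S.smul_mem (1 / 2 : ℂ) (S.sub_mem h1 h2)
  convert h3 using 1
  refine Prod.ext rfl ?_
  simp only [s_apply, Prod.smul_snd, Prod.snd_sub]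
  push_cast
  have hI : Complex.I * Complex.I = -1 := Complex.I_mul_I
  have e1 : (m : ℂ) * Complex.I * (m * Complex.I) = -(m : ℂ) ^ 2 := by
    linear_combination (m : ℂ) ^ 2 * hI
  have e2 : (m : ℂ) * Complex.I * (-m * Complex.I) = (m : ℂ) ^ 2 := by
    linear_combination -(m : ℂ) ^ 2 * hI
  have e1' : ∀ a b : E.carrier, (((m : ℂ) * Complex.I) • (a - ((m : ℂ) * Complex.I) • b))
      = ((m : ℂ) * Complex.I) • a + (m : ℂ) ^ 2 • b := fun a b => by
    rw [smul_sub, smul_smul, e1]; module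
  have e2' : ∀ a b : E.carrier, (((m : ℂ) * Complex.I) • (a - (-(m : ℂ) * Complex.I) • b))
      = ((m : ℂ) * Complex.I) • a - (m : ℂ) ^ 2 • b := fun a b => by
    rw [smul_sub, smul_smul, e2]
  rw [e1', e2']
  module

lemma s_mem {m : ℝ} (hm : m ≠ 0) (x : E.carrier) :
    (ρ.s m x, (m ^ 2 : ℂ) • (x - ρ.D m x)) ∈ S := by
  have h3 := S.smul_mem (m ^ 2 / 2 : ℂ)
    (S.add_mem (ρ.mem m hm x) (ρ.mem (-m) (neg_ne_zero.2 hm) x))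
  convert h3 using 1
  refine Prod.ext rfl ?_
  simp only [D_apply, Prod.smul_snd, Prod.snd_add]
  push_cast
  module

lemma s_eq_D {n : ℝ} (hn : n ≠ 0) {p : E.carrier × E.carrier} (hp : p ∈ S) :
    ρ.s n p.1 = ρ.D n p.2 := by
  rw [s_apply, D_apply, ρ.map hn hp, ρ.map (neg_ne_zero.2 hn) hp]
  push_cast
  have hI : Complex.I * Complex.I = -1 := Complex.I_mul_I
  have e1 : (n : ℂ) * Complex.I * (n * Complex.I) = -(n : ℂ) ^ 2 := by
    linear_combination (n : ℂ) ^ 2 * hI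
  have e2 : (n : ℂ) * Complex.I * (-n * Complex.I) = (n : ℂ) ^ 2 := by
    linear_combination -(n : ℂ) ^ 2 * hI
  have e1' : ∀ a b : E.carrier, (((n : ℂ) * Complex.I) • (a - ((n : ℂ) * Complex.I) • b))
      = ((n : ℂ) * Complex.I) • a + (n : ℂ) ^ 2 • b := fun a b => by
    rw [smul_sub, smul_smul, e1]; module
  have e2' : ∀ a b : E.carrier, (((n : ℂ) * Complex.I) • (a - (-(n : ℂ) * Complex.I) • b))
      = ((n : ℂ) * Complex.I) • a - (n : ℂ) ^ 2 • b := fun a b => by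
    rw [smul_sub, smul_smul, e2]
  rw [e1', e2']
  module

lemma s_comm_D {m n : ℝ} (hm : m ≠ 0) (hn : n ≠ 0) (x : E.carrier) :
    ρ.D m (ρ.s n x) = ρ.s n (ρ.D m x) := by
  have hm' := neg_ne_zero.2 hm
  have hn' := neg_ne_zero.2 hn
  simp only [s_apply, D_apply, map_smul, map_add, map_sub, ρ.comm hn hm, ρ.comm hn hm',
    ρ.comm hn' hm, ρ.comm hn' hm']
  module

lemma sub_D_bound {n : ℝ} (hn : 0 < n) {p : E.carrier × E.carrier} (hp : p ∈ S) :
    n * ‖p.1 - ρ.D n p.1‖ ≤ ‖p.2‖ := by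
  have e : p.1 - ρ.D n p.1 = (1 / 2 : ℂ) • (ρ.r n p.2 + ρ.r (-n) p.2) := by
    rw [D_apply, ρ.map hn.ne' hp, ρ.map (neg_ne_zero.2 hn.ne') hp]
    push_cast
    module
  have h1 := ρ.bound n hn.ne' p.2
  have h2 := ρ.bound (-n) (neg_ne_zero.2 hn.ne') p.2
  rw [abs_neg] at h2
  rw [abs_of_pos hn] at h1 h2
  have h3 := norm_add_le (ρ.r n p.2) (ρ.r (-n) p.2)
  rw [e, norm_smul]
  have h4 : ‖(1 / 2 : ℂ)‖ = 1 / 2 := by simp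
  rw [h4]
  nlinarith

lemma s_symm {n : ℝ} (hn : n ≠ 0) (x y : E.carrier) :
    E.inner (ρ.s n x) y = E.inner x (ρ.s n y) := by
  rw [s_apply, s_apply, inner_smul_left, E.inner_smul_right, inner_add_left, E.inner_add_right,
    ρ.adj n hn, ρ.adj (-n) (neg_ne_zero.2 hn), neg_neg, add_comm]
  congr 1
  simp

end Res

end resolvents

end UKK

namespace UKK

section approximation

variable {B : Type} [NonUnitalCStarAlgebra B] {E : HilbMod B}
  {S T T' : Submodule ℂ (E.carrier × E.carrier)}

/-- the relation `T (S + iμ)⁻¹ = -(S - iμ)⁻¹ (T - R (…))` -/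
def KProp (ρ : Res E S) (T : Submodule ℂ (E.carrier × E.carrier))
    (R : E.carrier →L[ℂ] E.carrier) : Prop :=
  ∀ p ∈ T, ∀ μ : ℝ, μ ≠ 0 →
    (ρ.r μ p.1, -ρ.r (-μ) (p.2 - R (p.1 + ((1 - (μ : ℂ)) * Complex.I) • ρ.r μ p.1))) ∈ T

lemma kprop_of (ρ : Res E S) (T : Set (E.carrier × E.carrier))
    (T₀ : Submodule ℂ (E.carrier × E.carrier)) (hT : (T₀ : Set (E.carrier × E.carrier)) = T)
    (h1 : ∀ μ : ℝ, μ ≠ 0 → ∀ x ∈ gdom T, ∀ y w, (y, w) ∈ (S : Set (E.carrier × E.carrier)) →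
      w + ((μ : ℂ) * Complex.I) • y = x →
      y ∈ gdom T ∧ ∀ ty, (y, ty) ∈ T → ty ∈ gdom (S : Set (E.carrier × E.carrier)))
    (R : Adj E E)
    (hR : ∀ x ∈ gdom T, ∀ y w, (y, w) ∈ (S : Set (E.carrier × E.carrier)) →
      w + (((1 : ℝ) : ℂ) * Complex.I) • y = x →
      ∀ ty sty tw, (y, ty) ∈ T → (ty, sty) ∈ (S : Set (E.carrier × E.carrier)) → (w, tw) ∈ T →
        R.toFun x = sty + tw) : KProp ρ T₀ R.toFun := by
  subst hT
  intro p hp μ hμ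
  have hS := ρ.mem μ hμ p.1
  set y := ρ.r μ p.1 with hy
  set w := p.1 - ((μ : ℂ) * Complex.I) • y with hw
  obtain ⟨⟨⟨y', ty⟩, hty, hyy⟩, h⟩ := h1 μ hμ p.1 ⟨p, hp, rfl⟩ y w hS (by rw [hw]; abel)
  have hyy' : y' = y := hyy
  rw [hyy'] at hty
  obtain ⟨⟨t', sty⟩, hsty, htt⟩ := h ty hty
  have htt' : t' = ty := htt
  rw [htt'] at hsty
  have hw' : (w, p.2 - ((μ : ℂ) * Complex.I) • ty) ∈ T₀ := T₀.sub_mem hp (T₀.smul_mem _ hty)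
  have hx' : w + (((1 : ℝ) : ℂ) * Complex.I) • y
      = p.1 + ((1 - (μ : ℂ)) * Complex.I) • y := by
    rw [hw]; push_cast; module
  have h3 := hR _ ⟨_, T₀.add_mem hw' (T₀.smul_mem (((1 : ℝ) : ℂ) * Complex.I) hty), rfl⟩
    y w hS rfl ty sty _ hty hsty hw'
  have h3' : R.toFun (p.1 + ((1 - (μ : ℂ)) * Complex.I) • y)
      = sty + (p.2 - ((μ : ℂ) * Complex.I) • ty) := by rw [← hx']; exact h3
  have h4 : p.2 - R.toFun (p.1 + ((1 - (μ : ℂ)) * Complex.I) • y)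
      = -(sty + (((-μ : ℝ) : ℂ) * Complex.I) • ty) := by
    rw [h3']; push_cast; module
  have h5 := ρ.uniq (-μ) (neg_ne_zero.2 hμ) _ hsty
  rw [h4, map_neg, neg_neg]
  simp only at h5
  rw [h5]
  exact hty

lemma KProp.D {ρ : Res E S} {R : E.carrier →L[ℂ] E.carrier} (K : KProp ρ T R)
    {p : E.carrier × E.carrier} (hp : p ∈ T) {m : ℝ} (hm : 1 ≤ m) :
    ∃ e, (ρ.D m p.1, ρ.D m p.2 + e) ∈ T ∧ ‖e‖ ≤ 3 * ‖R‖ * ‖p.1‖ := by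
  have hm0 : m ≠ 0 := by linarith
  have h1 := K p hp m hm0
  have h2 := K p hp (-m) (neg_ne_zero.2 hm0)
  rw [neg_neg] at h2
  set a := p.1 + ((1 - (m : ℂ)) * Complex.I) • ρ.r m p.1 with ha
  set b := p.1 + ((1 - ((-m : ℝ) : ℂ)) * Complex.I) • ρ.r (-m) p.1 with hb
  have h3 := T.smul_mem (1 / 2 : ℂ) (T.smul_mem ((m : ℂ) * Complex.I) (T.sub_mem h1 h2))
  refine ⟨(1 / 2 : ℂ) • ((m : ℂ) * Complex.I) • (ρ.r (-m) (R a) - ρ.r m (R b)), ?_, ?_⟩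
  · convert h3 using 1
    refine Prod.ext ?_ ?_
    · simp only [ρ.D_apply, Prod.smul_fst, Prod.fst_sub]; module
    · simp only [ρ.D_apply, Prod.smul_snd, Prod.snd_sub, map_sub]; module
  · have hna : ‖a‖ ≤ 2 * ‖p.1‖ := by
      have k1 := ρ.bound m hm0 p.1
      rw [abs_of_pos (by linarith)] at k1
      have k2 : ‖(1 - (m : ℂ)) * Complex.I‖ = m - 1 := by
        rw [norm_mul, Complex.norm_I, mul_one]
        have : (1 - (m : ℂ)) = ((1 - m : ℝ) : ℂ) := by push_cast; ring
        rw [this, Complex.norm_real, Real.norm_eq_abs, abs_of_nonpos (by linarith)]; ring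
      have k3 := norm_add_le p.1 (((1 - (m : ℂ)) * Complex.I) • ρ.r m p.1)
      rw [norm_smul, k2] at k3
      nlinarith [norm_nonneg (ρ.r m p.1)]
    have hnb : ‖b‖ ≤ 3 * ‖p.1‖ := by
      have k1 := ρ.bound (-m) (neg_ne_zero.2 hm0) p.1
      rw [abs_neg, abs_of_pos (by linarith)] at k1
      have k2 : ‖(1 - ((-m : ℝ) : ℂ)) * Complex.I‖ = m + 1 := by
        rw [norm_mul, Complex.norm_I, mul_one]
        have : (1 - ((-m : ℝ) : ℂ)) = ((1 + m : ℝ) : ℂ) := by push_cast; ring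
        rw [this, Complex.norm_real, Real.norm_eq_abs, abs_of_nonneg (by linarith)]; ring
      have k3 := norm_add_le p.1 (((1 - ((-m : ℝ) : ℂ)) * Complex.I) • ρ.r (-m) p.1)
      rw [norm_smul, k2] at k3
      nlinarith [norm_nonneg (ρ.r (-m) p.1)]
    have k1 := ρ.norm_J (neg_ne_zero.2 hm0) (R a)
    have k2 := ρ.norm_J hm0 (R b)
    have k3 := R.le_opNorm a
    have k4 := R.le_opNorm b
    have e : (1 / 2 : ℂ) • ((m : ℂ) * Complex.I) • (ρ.r (-m) (R a) - ρ.r m (R b))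
        = (-(1 / 2) : ℂ) • ((((-m : ℝ) : ℂ) * Complex.I) • ρ.r (-m) (R a)
          + ((m : ℂ) * Complex.I) • ρ.r m (R b)) := by
      push_cast; module
    rw [e, norm_smul]
    have h4 : ‖(-(1 / 2) : ℂ)‖ = 1 / 2 := by simp
    rw [h4]
    have k5 := norm_add_le ((((-m : ℝ) : ℂ) * Complex.I) • ρ.r (-m) (R a))
      (((m : ℂ) * Complex.I) • ρ.r m (R b))
    have k6 : ‖R‖ * ‖a‖ ≤ ‖R‖ * (2 * ‖p.1‖) := by gcongr
    have k7 : ‖R‖ * ‖b‖ ≤ ‖R‖ * (3 * ‖p.1‖) := by gcongr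
    have k8 : 0 ≤ ‖R‖ * ‖p.1‖ := by positivity
    linarith

lemma KProp.coord {ρ : Res E S} {R : E.carrier →L[ℂ] E.carrier} (K : KProp ρ T R)
    {x g : E.carrier} {m n : ℝ} (hm : 1 ≤ m) (hn : 0 < n) (h : (x, g - ρ.s n x) ∈ T) :
    ∃ g', (ρ.D m x, g') ∈ sumSub E S T ∧
      ‖ρ.D m g - g'‖ ≤ (2 * m ^ 2 / n + 3 * ‖R‖) * ‖x‖ := by
  have hm0 : m ≠ 0 := by linarith
  obtain ⟨e, he, hen⟩ := K.D h hm
  simp only at he hen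
  refine ⟨ρ.s m x + (ρ.D m (g - ρ.s n x) + e), ⟨_, _, ρ.D_mem hm0 x, he, rfl⟩, ?_⟩
  have k1 : ρ.D m (ρ.s n x) = ρ.D n (ρ.s m x) := by
    rw [ρ.s_comm_D hm0 hn.ne']
    exact ρ.s_eq_D hn.ne' (ρ.D_mem hm0 x)
  have k2 : ρ.D m g - (ρ.s m x + (ρ.D m (g - ρ.s n x) + e))
      = -((ρ.s m x - ρ.D n (ρ.s m x)) + e) := by
    rw [map_sub, k1]; abel
  rw [k2, norm_neg]
  have k3 := ρ.sub_D_bound hn (ρ.s_mem hm0 x)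
  simp only at k3
  have k4 : ‖(m ^ 2 : ℂ) • (x - ρ.D m x)‖ ≤ 2 * m ^ 2 * ‖x‖ := by
    rw [norm_smul]
    have : ‖(m ^ 2 : ℂ)‖ = m ^ 2 := by simp
    rw [this]
    have l1 := norm_sub_le x (ρ.D m x)
    have l2 := ρ.norm_D hm0 x
    nlinarith [sq_nonneg m]
  have k5 : ‖ρ.s m x - ρ.D n (ρ.s m x)‖ ≤ 2 * m ^ 2 / n * ‖x‖ := by
    rw [div_mul_eq_mul_div, le_div_iff₀ hn]; linarith
  have := norm_add_le (ρ.s m x - ρ.D n (ρ.s m x)) e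
  linarith

lemma dense_sum (ρ : Res E S) (hd : Dense (gdom (S : Set (E.carrier × E.carrier))))
    (hT : (T' : Set (E.carrier × E.carrier)) ⊆ adjointGraph E E T)
    (hs : ∀ μ : ℝ, μ ≠ 0 → Surj (offdiag E T T') μ)
    {R₁ R₂ : E.carrier →L[ℂ] E.carrier} (K₁ : KProp ρ T R₁) (K₂ : KProp ρ T' R₂)
    (l : ℝ) (hl : 1 ≤ |l|) (hl1 : 12 * ‖R₁‖ ≤ |l|) (hl2 : 12 * ‖R₂‖ ≤ |l|) :
    Dense (rangeSub (offdiag E (sumSub E S T) (sumSub E S T')) l :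
      Set (E.carrier × E.carrier)) := by
  refine dense_of_approx _ fun v hv => ?_
  have hv0 : 0 < ‖v‖ := norm_pos_iff.2 hv
  have hl0 : l ≠ 0 := by rintro rfl; simp at hl; linarith
  obtain ⟨M₁, hM₁, hM₁'⟩ := ρ.D_approx hd v.1 (ε := ‖v‖ / 16) (by positivity)
  obtain ⟨M₂, hM₂, hM₂'⟩ := ρ.D_approx hd v.2 (ε := ‖v‖ / 16) (by positivity)
  set m := max M₁ M₂ with hmdef
  have hm : 1 ≤ m := hM₁.trans (le_max_left _ _)
  have a1 := hM₁' m (le_max_left _ _)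
  have a2 := hM₂' m (le_max_right _ _)
  set n : ℝ := 64 * m ^ 2 with hn
  have hn0 : 0 < n := by positivity
  have hmn : 2 * m ^ 2 / n = 1 / 32 := by
    rw [hn]; field_simp; norm_num
  let A : (E.carrier × E.carrier) →L[ℂ] (E.carrier × E.carrier) :=
    ((ρ.s n).comp (ContinuousLinearMap.snd ℂ _ _)).prod
      ((ρ.s n).comp (ContinuousLinearMap.fst ℂ _ _))
  have hA : ∀ u w, (modForm2 E).φ (A u) w = (modForm2 E).φ u (A w) := by
    intro u w
    change E.inner (ρ.s n u.2) w.1 + E.inner (ρ.s n u.1) w.2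
      = E.inner u.1 (ρ.s n w.2) + E.inner u.2 (ρ.s n w.1)
    rw [ρ.s_symm hn0.ne', ρ.s_symm hn0.ne', add_comm]
  have hsym := offdiag_symm hT
  obtain ⟨p, hp, hpv⟩ := surj_pert_symm hsym hs A hA l hl0 v
  have hb := (pert_symm hsym hA).bound l hp
  rw [hpv] at hb
  change |l| * ‖p.1‖ ≤ 2 * ‖v‖ at hb
  have hp' := mem_pert.1 hp
  have hpx : (p.1.1, p.2.2 - ρ.s n p.1.1) ∈ T := hp'.1
  have hpy : (p.1.2, p.2.1 - ρ.s n p.1.2) ∈ T' := hp'.2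
  obtain ⟨g₀, hg₀, hg₀'⟩ := K₁.coord hm hn0 hpx
  obtain ⟨g₁, hg₁, hg₁'⟩ := K₂.coord hm hn0 hpy
  rw [hmn] at hg₀' hg₁'
  have est : ∀ (R : E.carrier →L[ℂ] E.carrier) (z : E.carrier), 12 * ‖R‖ ≤ |l| → ‖z‖ ≤ ‖p.1‖ →
      (1 / 32 + 3 * ‖R‖) * ‖z‖ ≤ 9 / 16 * ‖v‖ := by
    intro R z hR hz
    have c1 : ‖p.1‖ ≤ 2 * ‖v‖ := by nlinarith [norm_nonneg p.1]
    have c2 : 12 * ‖R‖ * ‖z‖ ≤ |l| * ‖p.1‖ :=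
      mul_le_mul hR hz (norm_nonneg _) (abs_nonneg _)
    nlinarith
  have b0 := est R₁ p.1.1 hl1 (norm_fst_le _)
  have b1 := est R₂ p.1.2 hl2 (norm_snd_le _)
  refine ⟨(g₁, g₀) + ((l : ℂ) * Complex.I) • (ρ.D m p.1.1, ρ.D m p.1.2),
    mem_rangeSub.2 ⟨((ρ.D m p.1.1, ρ.D m p.1.2), (g₁, g₀)), ⟨hg₀, hg₁⟩, rfl⟩, ?_⟩
  rw [Prod.norm_def]
  refine max_lt ?_ ?_
  · have e1 : p.2.1 + ((l : ℂ) * Complex.I) • p.1.1 = v.1 := congrArg Prod.fst hpv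
    have e : v.1 - (g₁ + ((l : ℂ) * Complex.I) • ρ.D m p.1.1)
        = -(ρ.D m v.1 - v.1) + (ρ.D m p.2.1 - g₁) := by
      rw [show ρ.D m v.1 = ρ.D m p.2.1 + ((l : ℂ) * Complex.I) • ρ.D m p.1.1 by
        rw [← e1, map_add, map_smul]]
      abel
    change ‖v.1 - (g₁ + ((l : ℂ) * Complex.I) • ρ.D m p.1.1)‖ < _
    rw [e]
    have := norm_add_le (-(ρ.D m v.1 - v.1)) (ρ.D m p.2.1 - g₁)
    rw [norm_neg] at this
    linarith
  · have e1 : p.2.2 + ((l : ℂ) * Complex.I) • p.1.2 = v.2 := congrArg Prod.snd hpv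
    have e : v.2 - (g₀ + ((l : ℂ) * Complex.I) • ρ.D m p.1.2)
        = -(ρ.D m v.2 - v.2) + (ρ.D m p.2.2 - g₀) := by
      rw [show ρ.D m v.2 = ρ.D m p.2.2 + ((l : ℂ) * Complex.I) • ρ.D m p.1.2 by
        rw [← e1, map_add, map_smul]]
      abel
    change ‖v.2 - (g₀ + ((l : ℂ) * Complex.I) • ρ.D m p.1.2)‖ < _
    rw [e]
    have := norm_add_le (-(ρ.D m v.2 - v.2)) (ρ.D m p.2.2 - g₀)
    rw [norm_neg] at this
    linarith

end approximation

end UKK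

namespace UKK

section closedness

variable {B : Type} [NonUnitalCStarAlgebra B] {E : HilbMod B}
  {S T : Submodule ℂ (E.carrier × E.carrier)}

lemma surj_all_of_one {X : Type} [NormedAddCommGroup X] [NormedSpace ℂ X] [CompleteSpace X]
    {F : HForm X B} {G : Submodule ℂ (X × X)} (h : F.Symm G) {l : ℝ} (hl : 0 < l)
    (h1 : Surj G l) (h2 : Surj G (-l)) (μ : ℝ) (hμ : μ ≠ 0) : Surj G μ := by
  rcases lt_or_gt_of_ne hμ with h0 | h0
  · exact surj_all h (neg_ne_zero.2 hl.ne') h2 (div_pos_of_neg_of_neg h0 (by linarith))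
  · exact surj_all h hl.ne' h1 (div_pos h0 hl)

lemma sigma_sq {σ : ℝ} (hσ : σ ^ 2 = 1) :
    ((σ : ℂ) * Complex.I) * ((σ : ℂ) * Complex.I) = -1 := by
  have h : (σ : ℂ) ^ 2 = 1 := by exact_mod_cast congrArg (fun t : ℝ => (t : ℂ)) hσ
  linear_combination (-1 : ℂ) * h + (σ : ℂ) ^ 2 * Complex.I_mul_I

lemma norm_sigma {σ : ℝ} (hσ : σ ^ 2 = 1) : ‖(σ : ℂ) * Complex.I‖ = 1 := by
  rw [norm_mul, Complex.norm_I, mul_one, Complex.norm_real, Real.norm_eq_abs]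
  nlinarith [abs_nonneg σ, sq_abs σ]

lemma dense_offdiag (hT : IsRegular E E (T : Set (E.carrier × E.carrier))) {σ : ℝ}
    (hσ : σ ^ 2 = 1) :
    Dense (rangeSub (offdiag E T (adjSub E T)) σ : Set (E.carrier × E.carrier)) := by
  obtain ⟨⟨_, _, _, hd⟩, hr⟩ := hT
  intro f
  rw [Metric.mem_closure_iff]
  intro ε hε
  obtain ⟨g₀, ⟨⟨g, tg⟩, hg, rfl⟩, hfg⟩ := Metric.mem_closure_iff.1 (hd f.2) ε hε
  set c : ℂ := (σ : ℂ) * Complex.I with hc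
  have hcc : c * c = -1 := sigma_sq hσ
  have hnc : ‖c‖ = 1 := norm_sigma hσ
  obtain ⟨w, ⟨x, y, z, hxy, hyz, rfl⟩, hw⟩ := Metric.mem_closure_iff.1 (hr (tg - c • f.1)) ε hε
  have hT1 : ((-c) • (g - y), (-c) • (tg - z)) ∈ adjSub E T :=
    (adjSub E T).smul_mem (-c) ((adjSub E T).sub_mem hg hyz)
  refine ⟨((-c) • (tg - z), y) + c • (x, (-c) • (g - y)),
    mem_rangeSub.2 ⟨((x, (-c) • (g - y)), ((-c) • (tg - z), y)), ⟨hxy, hT1⟩, rfl⟩, ?_⟩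
  rw [dist_eq_norm, Prod.norm_def]
  refine max_lt ?_ ?_
  · change ‖f.1 - ((-c) • (tg - z) + c • x)‖ < ε
    have e : f.1 - ((-c) • (tg - z) + c • x) = c • ((tg - c • f.1) - (x + z)) := by
      match_scalars <;> first | ring1 | linear_combination hcc | linear_combination (-1 : ℂ) * hcc
    rw [e, norm_smul, hnc, one_mul, ← dist_eq_norm]
    exact hw
  · change ‖f.2 - (y + c • (-c) • (g - y))‖ < ε
    have e : f.2 - (y + c • (-c) • (g - y)) = f.2 - g := by
      rw [smul_smul, mul_neg, hcc, neg_neg, one_smul]; abel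
    rw [e, ← dist_eq_norm]
    exact hfg

lemma surj_offdiag (hT : IsRegular E E (T : Set (E.carrier × E.carrier))) (μ : ℝ) (hμ : μ ≠ 0) :
    Surj (offdiag E T (adjSub E T)) μ := by
  have hs : (modForm2 E).Symm (offdiag E T (adjSub E T)) := offdiag_symm (fun _ h => h)
  have hc := offdiag_closed hT.1.2.1 
    (show IsClosed (adjSub E T : Set (E.carrier × E.carrier)) from isClosed_adjointGraph E T)
  exact surj_all_of_one hs one_pos
    (surj_of_dense hs hc one_ne_zero (dense_offdiag hT (by norm_num)))
    (surj_of_dense hs hc (by norm_num) (dense_offdiag hT (by norm_num))) μ hμ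

lemma surj_selfadj (hSsa : IsSelfAdjointGraph E (S : Set (E.carrier × E.carrier)))
    (hS : IsRegular E E (S : Set (E.carrier × E.carrier))) (h : (modForm E).Symm S)
    (μ : ℝ) (hμ : μ ≠ 0) : Surj S μ := by
  have key : ∀ σ : ℝ, σ ^ 2 = 1 → Dense (rangeSub S σ : Set E.carrier) := by
    intro σ hσ
    refine hS.2.mono ?_
    rintro w ⟨x, y, z, hxy, hyz, rfl⟩
    rw [hSsa] at hyz
    set c : ℂ := (σ : ℂ) * Complex.I with hc
    have hcc : c * c = -1 := sigma_sq hσ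
    refine mem_rangeSub.2 ⟨(y - c • x, z - c • y), S.sub_mem hyz (S.smul_mem c hxy), ?_⟩
    change z - c • y + c • (y - c • x) = x + z
    match_scalars <;> first | ring1 | linear_combination hcc | linear_combination (-1 : ℂ) * hcc
  exact surj_all_of_one h one_pos
    (surj_of_dense h hS.1.2.1 one_ne_zero (key _ (by norm_num)))
    (surj_of_dense h hS.1.2.1 (by norm_num) (key _ (by norm_num))) μ hμ

lemma KProp.cross_approx {ρ : Res E S} {R : E.carrier →L[ℂ] E.carrier} (K : KProp ρ T R)
    (hS : (modForm E).Symm S) (hT : (modForm E).Symm T) {x sx tx : E.carrier}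
    (hx : (x, sx) ∈ S) (hx' : (x, tx) ∈ T) {μ : ℝ} (hμ : 0 < μ) :
    ‖E.inner sx ((((-μ : ℝ) : ℂ) * Complex.I) • ρ.r (-μ) tx)
      + E.inner tx (((μ : ℂ) * Complex.I) • ρ.r μ sx)‖ ≤ ‖R‖ * ‖x‖ * (‖sx‖ + ‖x‖) := by
  have hμ0 := hμ.ne'
  have k1 := K _ hx' μ hμ0
  have k2 := ρ.map hμ0 hx
  simp only at k1 k2
  set y := ρ.r μ x with hy
  set c : ℂ := (μ : ℂ) * Complex.I with hc
  have hcc : c * c = -(μ : ℂ) ^ 2 := by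
    rw [hc]; linear_combination (μ : ℂ) ^ 2 * Complex.I_mul_I
  set a := x + ((1 - (μ : ℂ)) * Complex.I) • y with ha
  have ha' : a = ρ.r μ (sx + Complex.I • x) := by
    rw [map_add, map_smul, k2, ha, hc]; module
  have e1 : c • ρ.r μ sx = c • x + ((μ : ℂ) ^ 2) • y := by
    rw [k2]; match_scalars <;> first | ring1 | linear_combination hcc | linear_combination (-1 : ℂ) * hcc
  have m1 : (c • x + ((μ : ℂ) ^ 2) • y, c • tx + ((μ : ℂ) ^ 2) • -ρ.r (-μ) (tx - R a)) ∈ T :=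
    T.add_mem (T.smul_mem c hx') (T.smul_mem _ k1)
  have f1 : E.inner tx (c • ρ.r μ sx)
      = E.inner x (c • tx + ((μ : ℂ) ^ 2) • -ρ.r (-μ) (tx - R a)) := by
    rw [e1]; exact hT _ hx' _ m1
  have hc' : ((-μ : ℝ) : ℂ) * Complex.I = -c := by rw [hc]; push_cast; ring
  have m2 := S.smul_mem (-c) (ρ.mem (-μ) (neg_ne_zero.2 hμ0) tx)
  rw [hc'] at m2 ⊢
  have f2 : E.inner sx ((-c) • ρ.r (-μ) tx)
      = E.inner x ((-c) • (tx - (-c) • ρ.r (-μ) tx)) := hS _ hx _ m2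
  rw [f1, f2, ← E.inner_add_right]
  have e3 : (-c) • (tx - (-c) • ρ.r (-μ) tx)
      + (c • tx + ((μ : ℂ) ^ 2) • -ρ.r (-μ) (tx - R a)) = ((μ : ℂ) ^ 2) • ρ.r (-μ) (R a) := by
    rw [map_sub]
    match_scalars <;> first | ring1 | linear_combination hcc | linear_combination (-1 : ℂ) * hcc
  rw [e3]
  have b1 := ρ.bound (-μ) (neg_ne_zero.2 hμ0) (R a)
  have b2 := ρ.bound μ hμ0 (sx + Complex.I • x)
  rw [← ha'] at b2
  rw [abs_neg] at b1
  rw [abs_of_pos hμ] at b1 b2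
  have b3 := R.le_opNorm a
  have b4 : ‖sx + Complex.I • x‖ ≤ ‖sx‖ + ‖x‖ := by
    refine (norm_add_le _ _).trans ?_
    rw [norm_smul, Complex.norm_I, one_mul]
  have b5 : ‖((μ : ℂ) ^ 2) • ρ.r (-μ) (R a)‖ ≤ ‖R‖ * (‖sx‖ + ‖x‖) := by
    rw [norm_smul]
    have : ‖((μ : ℂ) ^ 2)‖ = μ * μ := by simp [sq, abs_of_pos hμ]
    rw [this]
    calc μ * μ * ‖ρ.r (-μ) (R a)‖ = μ * (μ * ‖ρ.r (-μ) (R a)‖) := by ring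
      _ ≤ μ * (‖R‖ * ‖a‖) := mul_le_mul_of_nonneg_left (b1.trans b3) hμ.le
      _ = ‖R‖ * (μ * ‖a‖) := by ring
      _ ≤ ‖R‖ * (‖sx‖ + ‖x‖) := mul_le_mul_of_nonneg_left (b2.trans b4) (norm_nonneg R)
  calc _ ≤ ‖x‖ * ‖((μ : ℂ) ^ 2) • ρ.r (-μ) (R a)‖ := E.norm_inner_le _ _
    _ ≤ ‖x‖ * (‖R‖ * (‖sx‖ + ‖x‖)) := by gcongr
    _ = _ := by ring

lemma KProp.cross {ρ : Res E S} {R : E.carrier →L[ℂ] E.carrier} (K : KProp ρ T R)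
    (hd : Dense (gdom (S : Set (E.carrier × E.carrier))))
    (hS : (modForm E).Symm S) (hT : (modForm E).Symm T) {x sx tx : E.carrier}
    (hx : (x, sx) ∈ S) (hx' : (x, tx) ∈ T) :
    ‖E.inner sx tx + E.inner tx sx‖ ≤ ‖R‖ * ‖x‖ * (‖sx‖ + ‖x‖) := by
  refine le_of_forall_pos_le_add fun ε hε => ?_
  set δ := ε / (‖sx‖ + ‖tx‖ + 1) with hδ
  have hδ0 : 0 < δ := by positivity
  obtain ⟨M₁, h11, h1⟩ := ρ.J_approx hd tx hδ0
  obtain ⟨M₂, h21, h2⟩ := ρ.J_approx hd sx hδ0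
  set μ := max M₁ M₂ with hμ
  have hμ0 : 0 < μ := by
    have : M₁ ≤ μ := le_max_left _ _
    linarith
  have a1 := h1 (-μ) (by rw [abs_neg, abs_of_pos hμ0]; exact le_max_left _ _)
  have a2 := h2 μ (by rw [abs_of_pos hμ0]; exact le_max_right _ _)
  have a3 := K.cross_approx hS hT hx hx' hμ0
  set u := (((-μ : ℝ) : ℂ) * Complex.I) • ρ.r (-μ) tx
  set v := ((μ : ℂ) * Complex.I) • ρ.r μ sx
  have e : E.inner sx tx + E.inner tx sx = (E.inner sx u + E.inner tx v)
      - (E.inner sx (u - tx) + E.inner tx (v - sx)) := by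
    rw [inner_sub_right, inner_sub_right]; abel
  rw [e]
  have b1 := E.norm_inner_le sx (u - tx)
  have b2 := E.norm_inner_le tx (v - sx)
  have b3 := norm_sub_le (E.inner sx u + E.inner tx v) (E.inner sx (u - tx) + E.inner tx (v - sx))
  have b4 := norm_add_le (E.inner sx (u - tx)) (E.inner tx (v - sx))
  have b5 : ‖sx‖ * ‖u - tx‖ ≤ ‖sx‖ * δ := by gcongr
  have b6 : ‖tx‖ * ‖v - sx‖ ≤ ‖tx‖ * δ := by gcongr
  have b7 : (‖sx‖ + ‖tx‖ + 1) * δ = ε := by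
    rw [hδ]; field_simp
  nlinarith

lemma KProp.graph_bound {ρ : Res E S} {R : E.carrier →L[ℂ] E.carrier} (K : KProp ρ T R)
    (hd : Dense (gdom (S : Set (E.carrier × E.carrier))))
    (hS : (modForm E).Symm S) (hT : (modForm E).Symm T) {x sx tx : E.carrier}
    (hx : (x, sx) ∈ S) (hx' : (x, tx) ∈ T) :
    ‖sx‖ ≤ (‖R‖ + 2) * (‖sx + tx‖ + ‖x‖) := by
  have h1 := K.cross hd hS hT hx hx'
  have h2 := norm_sq_le_add sx tx
  have e : E.inner sx sx + E.inner tx tx = E.inner (sx + tx) (sx + tx)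
      - (E.inner sx tx + E.inner tx sx) := by
    rw [E.inner_add_right, inner_add_left, inner_add_left]; abel
  rw [e] at h2
  have h3 := norm_sub_le (E.inner (sx + tx) (sx + tx)) (E.inner sx tx + E.inner tx sx)
  rw [norm_inner_self] at h3
  by_contra hcon
  push Not at hcon
  set K := ‖R‖
  set a := ‖sx‖
  set d := ‖sx + tx‖
  set b := ‖x‖
  have hK : 0 ≤ K := norm_nonneg _
  have ha : 0 ≤ a := norm_nonneg _
  have hd0 : 0 ≤ d := norm_nonneg _
  have hb : 0 ≤ b := norm_nonneg _
  set N := d + b with hN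
  have hN0 : 0 ≤ N := by positivity
  have h4 : a ^ 2 ≤ N * N + K * N * (a + N) := by
    have i1 : d * d ≤ N * N := by nlinarith
    have i2 : K * b * (a + b) ≤ K * N * (a + N) := by
      gcongr <;> linarith
    linarith
  have ha' : 0 < a := lt_of_le_of_lt (by positivity) hcon
  have h5 : (K + 2) * N * a < a ^ 2 := by nlinarith
  have h6 : N * ((K + 2) * N) ≤ N * a := by gcongr
  nlinarith [mul_nonneg hK (mul_nonneg hN0 hN0), mul_nonneg hN0 hN0]

lemma KProp.closed {ρ : Res E S} {R : E.carrier →L[ℂ] E.carrier} (K : KProp ρ T R)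
    (hd : Dense (gdom (S : Set (E.carrier × E.carrier))))
    (hS : (modForm E).Symm S) (hT : (modForm E).Symm T)
    (hSc : IsClosed (S : Set (E.carrier × E.carrier)))
    (hTc : IsClosed (T : Set (E.carrier × E.carrier))) :
    IsClosed (sumSub E S T : Set (E.carrier × E.carrier)) := by
  rw [← isSeqClosed_iff_isClosed]
  intro p q hp hq
  choose y₁ y₂ h1 h2 h3 using hp
  have hc : 0 < 2 * (‖R‖ + 2) := by positivity
  have hcau : CauchySeq y₁ := by
    have h0 : CauchySeq p := hq.cauchySeq
    rw [Metric.cauchySeq_iff] at h0 ⊢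
    intro ε hε
    obtain ⟨N, hN⟩ := h0 (ε / (2 * (‖R‖ + 2))) (by positivity)
    refine ⟨N, fun m hm n hn => ?_⟩
    have k1 := hN m hm n hn
    rw [lt_div_iff₀ hc, dist_eq_norm] at k1
    rw [dist_eq_norm]
    have k0 : ((p m - p n).1, y₁ m - y₁ n) ∈ S := S.sub_mem (h1 m) (h1 n)
    have k0' : ((p m - p n).1, y₂ m - y₂ n) ∈ T := T.sub_mem (h2 m) (h2 n)
    have k2 := K.graph_bound hd hS hT k0 k0'
    have e : y₁ m - y₁ n + (y₂ m - y₂ n) = (p m - p n).2 := by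
      rw [Prod.snd_sub, h3, h3]; abel
    have k2' : ‖y₁ m - y₁ n‖ ≤ (‖R‖ + 2) * (‖(p m - p n).2‖ + ‖(p m - p n).1‖) := by
      rw [← e]; exact k2
    have k3 := norm_fst_le (p m - p n)
    have k4 := norm_snd_le (p m - p n)
    have k5 : (‖R‖ + 2) * (‖(p m - p n).2‖ + ‖(p m - p n).1‖)
        ≤ (‖R‖ + 2) * (‖p m - p n‖ + ‖p m - p n‖) := by gcongr
    linarith
  obtain ⟨s, hs⟩ := cauchySeq_tendsto_of_complete hcau
  have l1 : Filter.Tendsto (fun n => (p n).1) Filter.atTop (nhds q.1) :=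
    (continuous_fst.tendsto q).comp hq
  have l2 : Filter.Tendsto (fun n => (p n).2) Filter.atTop (nhds q.2) :=
    (continuous_snd.tendsto q).comp hq
  have l3 : Filter.Tendsto y₂ Filter.atTop (nhds (q.2 - s)) := by
    refine (l2.sub hs).congr fun n => ?_
    rw [h3]; abel
  refine ⟨s, q.2 - s, ?_, ?_, by abel⟩
  · exact hSc.mem_of_tendsto (l1.prodMk_nhds hs) (Filter.Eventually.of_forall h1)
  · exact hTc.mem_of_tendsto (l1.prodMk_nhds l3) (Filter.Eventually.of_forall h2)

end closedness

end UKK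

namespace UKK

/-- **Theorem (Kaad–Lesch type sum theorem; Theorem 2.3 of the paper).**
Let `S` be a self-adjoint regular operator and `T` a symmetric regular operator on a
Hilbert `B`-module `E`.  Assume, for every `μ ∈ ℝ \ {0}`:
(1) `(S+iμ)⁻¹ Dom T ⊆ Dom S ∩ Dom T ∩ Dom (ST)` and `(ST+TS)(S+iμ)⁻¹` extends to a
bounded adjointable operator on `E`;
(2) the same with `T` replaced by `T*`.
Then `S + T` is a closed regular symmetric operator with domain `Dom S ∩ Dom T`, and
`(S+T)*` is the closure of `S + T*` with domain `Dom S ∩ Dom T*`.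

Here operators are represented by their graphs; `(y, w) ∈ GS` means `w = S y`, and the
element `(S + iμ)⁻¹ x` is represented by the `y` with `(y, w) ∈ GS` and `w + iμ y = x`. -/
theorem sum_selfadjoint_symmetric_regular
    {B : Type} [NonUnitalCStarAlgebra B] (E : HilbMod B)
    (GS GT : Set (E.carrier × E.carrier))
    (hSsa : IsSelfAdjointGraph E GS) (hSreg : IsRegular E E GS)
    (hTsym : IsSymmetricGraph E GT) (hTreg : IsRegular E E GT)
    -- condition (1): domain mapping
    (h1 : ∀ μ : ℝ, μ ≠ 0 → ∀ x ∈ gdom GT, ∀ y w, (y, w) ∈ GS →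
      w + ((μ : ℂ) * Complex.I) • y = x →
      y ∈ gdom GT ∧ ∀ ty, (y, ty) ∈ GT → ty ∈ gdom GS)
    -- condition (1): bounded adjointable extension of `(ST+TS)(S+iμ)⁻¹`
    (h1' : ∀ μ : ℝ, μ ≠ 0 → ∃ R : Adj E E, ∀ x ∈ gdom GT, ∀ y w, (y, w) ∈ GS →
      w + ((μ : ℂ) * Complex.I) • y = x →
      ∀ ty sty tw, (y, ty) ∈ GT → (ty, sty) ∈ GS → (w, tw) ∈ GT →
        R.toFun x = sty + tw)
    -- condition (2): domain mapping
    (h2 : ∀ μ : ℝ, μ ≠ 0 → ∀ x ∈ gdom (adjointGraph E E GT), ∀ y w, (y, w) ∈ GS →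
      w + ((μ : ℂ) * Complex.I) • y = x →
      y ∈ gdom (adjointGraph E E GT) ∧
        ∀ ty, (y, ty) ∈ adjointGraph E E GT → ty ∈ gdom GS)
    -- condition (2): bounded adjointable extension of `(ST*+T*S)(S+iμ)⁻¹`
    (h2' : ∀ μ : ℝ, μ ≠ 0 → ∃ R : Adj E E, ∀ x ∈ gdom (adjointGraph E E GT), ∀ y w,
      (y, w) ∈ GS → w + ((μ : ℂ) * Complex.I) • y = x →
      ∀ ty sty tw, (y, ty) ∈ adjointGraph E E GT → (ty, sty) ∈ GS →
        (w, tw) ∈ adjointGraph E E GT →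
        R.toFun x = sty + tw) :
    IsClosed (sumGraph E E GS GT) ∧
    IsSymmetricGraph E (sumGraph E E GS GT) ∧
    IsRegular E E (sumGraph E E GS GT) ∧
    gdom (sumGraph E E GS GT) = gdom GS ∩ gdom GT ∧
    adjointGraph E E (sumGraph E E GS GT)
      = closure (sumGraph E E GS (adjointGraph E E GT)) := by
  obtain ⟨S, rfl⟩ := hSreg.1.1.1
  obtain ⟨T, rfl⟩ := hTreg.1.1.1
  obtain ⟨⟨_, hSB, hSu⟩, hSc, hSd, _⟩ := hSreg.1
  obtain ⟨⟨_, hTB, hTu⟩, hTc, hTd, _⟩ := hTreg.1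
  have hSs : (modForm E).Symm S := fun p hp q hq => by
    have hq' : q ∈ adjointGraph E E (S : Set (E.carrier × E.carrier)) := by rw [hSsa]; exact hq
    exact hq' p hp
  have hTs : (modForm E).Symm T := fun p hp q hq => hTsym hq p hp
  obtain ⟨ρ⟩ := exists_res hSs (surj_selfadj hSsa hSreg hSs)
  obtain ⟨R₁, hR₁⟩ := h1' 1 one_ne_zero
  obtain ⟨R₂, hR₂⟩ := h2' 1 one_ne_zero
  have K₁ : KProp ρ T R₁.toFun := kprop_of ρ _ T rfl h1 R₁ hR₁
  have K₂ : KProp ρ (adjSub E T) R₂.toFun := kprop_of ρ _ (adjSub E T) rfl h2 R₂ hR₂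
  have hclosed : IsClosed (sumSub E S T : Set (E.carrier × E.carrier)) :=
    K₁.closed hSd hSs hTs hSc hTc
  have hadj : (sumSub E S (adjSub E T) : Set (E.carrier × E.carrier))
      ⊆ adjointGraph E E (sumSub E S T) := by
    rintro ⟨x, _⟩ ⟨s, t, hs, ht, rfl⟩ ⟨x', _⟩ ⟨s', t', hs', ht', rfl⟩
    have e1 : E.inner s' x = E.inner x' s := hSs _ hs' _ hs
    have e2 : E.inner t' x = E.inner x' t := ht _ ht'
    change E.inner (s' + t') x = E.inner x' (s + t)
    rw [inner_add_left, E.inner_add_right, e1, e2]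
  have hsub : (sumSub E S T : Set (E.carrier × E.carrier)) ⊆ sumSub E S (adjSub E T) := by
    rintro p ⟨s, t, hs, ht, h⟩
    exact ⟨s, t, hs, hTsym ht, h⟩
  set C := (sumSub E S (adjSub E T)).topologicalClosure with hCdef
  have hCle : sumSub E S (adjSub E T) ≤ C := Submodule.le_topologicalClosure _
  have hC : (C : Set (E.carrier × E.carrier)) ⊆ adjointGraph E E (sumSub E S T) :=
    closure_minimal hadj (isClosed_adjointGraph E _)
  have hGs : (modForm2 E).Symm (offdiag E (sumSub E S T) C) := offdiag_symm hC
  have hGc := offdiag_closed hclosed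
    (show IsClosed (C : Set (E.carrier × E.carrier)) from
      Submodule.isClosed_topologicalClosure _)
  have hGd : ∀ l : ℝ, 1 ≤ |l| → 12 * ‖R₁.toFun‖ ≤ |l| → 12 * ‖R₂.toFun‖ ≤ |l| →
      Surj (offdiag E (sumSub E S T) C) l := by
    intro l hl hl1 hl2
    have hl0 : l ≠ 0 := by rintro rfl; simp at hl; linarith
    refine surj_of_dense hGs hGc hl0
      ((dense_sum ρ hSd (T' := adjSub E T) (fun _ h => h) (surj_offdiag hTreg) K₁ K₂ l
        hl hl1 hl2).mono ?_)
    intro f hf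
    obtain ⟨p, hp, hpf⟩ := mem_rangeSub.1 hf
    exact mem_rangeSub.2 ⟨p, ⟨hp.1, hCle hp.2⟩, hpf⟩
  have n1 := norm_nonneg R₁.toFun
  have n2 := norm_nonneg R₂.toFun
  have hl : 0 < 1 + 12 * ‖R₁.toFun‖ + 12 * ‖R₂.toFun‖ := by positivity
  have hG : ∀ μ : ℝ, μ ≠ 0 → Surj (offdiag E (sumSub E S T) C) μ := by
    refine surj_all_of_one hGs hl (hGd _ ?_ ?_ ?_) (hGd _ ?_ ?_ ?_)
    all_goals
      try rw [abs_neg]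
      rw [abs_of_pos hl]
      linarith
  have hAC : adjointGraph E E (sumSub E S T) = (C : Set (E.carrier × E.carrier)) := by
    refine Set.Subset.antisymm (fun q hq => ?_) hC
    have h := mem_of_adjoint (hG 1 one_ne_zero) (hG (-1) (by norm_num)) ((0, q.1), (q.2, 0))
      (fun p hp => by
        have e := hq _ hp.1
        change E.inner p.2.1 0 + E.inner p.2.2 q.1 = E.inner p.1.1 q.2 + E.inner p.1.2 0
        rw [inner_zero_right, inner_zero_right, zero_add, add_zero]
        exact e) hGs
    exact h.2
  have hsymm : IsSymmetricGraph E (sumGraph E E (S : Set (E.carrier × E.carrier)) T) :=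
    hsub.trans hadj
  have hdd : Dense (gdom (sumGraph E E (S : Set (E.carrier × E.carrier)) T)) := by
    refine Dense.of_closure (hTd.mono ?_)
    rintro _ ⟨p, hp, rfl⟩
    rw [Metric.mem_closure_iff]
    intro ε hε
    obtain ⟨M, hM1, hM⟩ := ρ.J_approx hSd p.1 hε
    have hM0 : M ≠ 0 := by linarith
    refine ⟨((M : ℂ) * Complex.I) • ρ.r M p.1, ?_, ?_⟩
    · exact ⟨(((M : ℂ) * Complex.I) • ρ.r M p.1, _), ⟨_, _, S.smul_mem ((M : ℂ) * Complex.I) (ρ.mem M hM0 p.1),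
        T.smul_mem ((M : ℂ) * Complex.I) (K₁ p hp M hM0), rfl⟩, rfl⟩
    · rw [dist_comm, dist_eq_norm]
      exact hM M (le_abs_self _)
  refine ⟨hclosed, hsymm, ⟨⟨⟨⟨sumSub E S T, rfl⟩, ?_, ?_⟩, hclosed, hdd,
    hdd.mono (Set.image_mono hsymm)⟩, ?_⟩, ?_, hAC⟩
  · rintro p ⟨s, t, hs, ht, h⟩ b
    refine ⟨_, _, hSB _ hs b, hTB _ ht b, ?_⟩
    change E.smulB p.2 b = _
    rw [h, E.add_smulB]
  · rintro y ⟨s, t, hs, ht, h⟩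
    have e1 := hSu s hs
    have e2 := hTu t ht
    change y = s + t at h
    rw [h, e1, e2, add_zero]
  · intro f
    refine subset_closure ?_
    obtain ⟨p, hp, hpf⟩ := hG 1 one_ne_zero (Complex.I • f, 0)
    have f1 : p.2.1 + (((1 : ℝ) : ℂ) * Complex.I) • p.1.1 = Complex.I • f :=
      congrArg Prod.fst hpf
    have f2 : p.2.2 + (((1 : ℝ) : ℂ) * Complex.I) • p.1.2 = 0 := congrArg Prod.snd hpf
    rw [Complex.ofReal_one, one_mul] at f1 f2
    have f3 : p.2.2 = (-Complex.I) • p.1.2 := by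
      rw [eq_neg_of_add_eq_zero_left f2, neg_smul]
    have f4 : p.2.1 = Complex.I • f - Complex.I • p.1.1 := eq_sub_of_add_eq f1
    refine ⟨p.1.1, p.2.2, (-Complex.I) • p.2.1, hp.1, ?_, ?_⟩
    · rw [f3]
      exact (adjSub E (sumSub E S T)).smul_mem (-Complex.I) (hC hp.2)
    · rw [f4, smul_sub, smul_smul, smul_smul, neg_mul, Complex.I_mul_I, neg_neg, one_smul,
        one_smul]
      abel
  · ext x
    constructor
    · rintro ⟨p, ⟨s, t, hs, ht, _⟩, rfl⟩
      exact ⟨⟨_, hs, rfl⟩, ⟨_, ht, rfl⟩⟩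
    · rintro ⟨⟨⟨_, s⟩, hs, rfl⟩, ⟨⟨x', t⟩, ht, hx⟩⟩
      have hx' : x' = _ := hx
      rw [hx'] at ht
      exact ⟨(_, s + t), ⟨s, t, hs, ht, rfl⟩, rfl⟩

end UKK
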